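/- The iterated improper integral I₃ = ∫_{-∞}^{∞} ds₁ ∫_{-∞}^{s₁} ds₂ ⋯ ∫_{-∞}^{s₅} ds₆ cos(s₁² − s₂²)·cos(s₃² − s₄²)·cos(s₅² − s₆²) converges and equals (2/3!)·(π/4)³ = π³/192. -/

import Mathlib

open Real MeasureTheory Filter Topology intervalIntegral


noncomputable def volt (T : ℝ) (g : ℝ → ℂ) (s : ℝ) : ℂ :=
  ∫ x in (-T)..s, ∫ y in (-T)..x, (Real.cos (x ^ 2 - y ^ 2) : ℂ) * g y

lemma volt_inner_cont (T : ℝ) (g : ℝ → ℂ) (hg : Continuous g) :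
    Continuous fun x : ℝ => ∫ y in (-T)..x, (Real.cos (x ^ 2 - y ^ 2) : ℂ) * g y := by
  apply intervalIntegral.continuous_parametric_intervalIntegral_of_continuous
  · simp only [Function.uncurry_def]; fun_prop
  · fun_prop

lemma volt_cont (T : ℝ) (g : ℝ → ℂ) (hg : Continuous g) : Continuous (volt T g) := by
  have h := volt_inner_cont T g hg
  exact intervalIntegral.continuous_primitive (fun a b => h.intervalIntegrable a b) (-T)

lemma int_pow_shift (T s : ℝ) (m : ℕ) :
    ∫ x in (-T)..s, (x + T) ^ m = (s + T) ^ (m + 1) / (m + 1) := by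
  rw [intervalIntegral.integral_comp_add_right (fun x => x ^ m) T]
  rw [integral_pow]; simp

lemma volt_bound (T M : ℝ) (m : ℕ) (g : ℝ → ℂ) (hg : Continuous g)
    (h : ∀ s, -T ≤ s → s ≤ T → ‖g s‖ ≤ M * (s + T) ^ m) :
    ∀ s, -T ≤ s → s ≤ T → ‖volt T g s‖ ≤ M / ((m + 1) * (m + 2)) * (s + T) ^ (m + 2) := by
  have inner : ∀ x, -T ≤ x → x ≤ T →
      ‖∫ y in (-T)..x, (Real.cos (x ^ 2 - y ^ 2) : ℂ) * g y‖ ≤ M / (m + 1) * (x + T) ^ (m + 1) := by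
    intro x hx hxT
    have : ‖∫ y in (-T)..x, (Real.cos (x ^ 2 - y ^ 2) : ℂ) * g y‖ ≤
        ∫ y in (-T)..x, M * (y + T) ^ m := by
      apply intervalIntegral.norm_integral_le_of_norm_le hx
      · refine Eventually.of_forall fun y hy => ?_
        rw [norm_mul]
        have h1 : ‖(Real.cos (x ^ 2 - y ^ 2) : ℂ)‖ ≤ 1 := by
          rw [Complex.norm_real]; exact Real.abs_cos_le_one _
        have h2 := h y hy.1.le (hy.2.trans hxT)
        nlinarith [norm_nonneg (g y), norm_nonneg (Real.cos (x ^ 2 - y ^ 2) : ℂ)]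
      · apply Continuous.intervalIntegrable; fun_prop
    refine this.trans (le_of_eq ?_)
    rw [intervalIntegral.integral_const_mul, int_pow_shift]; ring
  intro s hs hsT
  have : ‖volt T g s‖ ≤ ∫ x in (-T)..s, M / (m + 1) * (x + T) ^ (m + 1) := by
    apply intervalIntegral.norm_integral_le_of_norm_le hs
    · exact Eventually.of_forall fun y hy => inner y hy.1.le (hy.2.trans hsT)
    · apply Continuous.intervalIntegrable; fun_prop
  refine this.trans (le_of_eq ?_)
  rw [intervalIntegral.integral_const_mul, int_pow_shift]
  push_cast
  have h1 : (m + 1 : ℝ) ≠ 0 := by positivity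
  have h2 : (m + 2 : ℝ) ≠ 0 := by positivity
  have h3 : (m + 1 + 1 : ℝ) ≠ 0 := by positivity
  field_simp
  ring

lemma iter_cont (T : ℝ) (g : ℝ → ℂ) (hg : Continuous g) (n : ℕ) :
    Continuous ((volt T)^[n] g) := by
  induction n with
  | zero => exact hg
  | succ n ih => rw [Function.iterate_succ_apply']; exact volt_cont _ _ ih

lemma iter_bound (T M : ℝ) (g : ℝ → ℂ) (hg : Continuous g)
    (h : ∀ s, -T ≤ s → s ≤ T → ‖g s‖ ≤ M) (n : ℕ) :
    ∀ s, -T ≤ s → s ≤ T → ‖(volt T)^[n] g s‖ ≤ M / (2 * n).factorial * (s + T) ^ (2 * n) := by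
  induction n with
  | zero => simpa using h
  | succ n ih =>
    intro s h1 h2
    rw [Function.iterate_succ_apply']
    have := volt_bound T _ (2 * n) _ (iter_cont T g hg n) ih s h1 h2
    refine this.trans (le_of_eq ?_)
    rw [show 2 * (n + 1) = 2 * n + 1 + 1 by ring, Nat.factorial_succ, Nat.factorial_succ]
    push_cast
    have h1 : (2 * n + 1 : ℝ) ≠ 0 := by positivity
    have h2 : (2 * n + 2 : ℝ) ≠ 0 := by positivity
    have h3 : (2 * n + 1 + 1 : ℝ) ≠ 0 := by positivity
    field_simp
    ring

lemma volt_lin (T : ℝ) (f g : ℝ → ℂ) (c : ℂ) (hf : Continuous f) (hg : Continuous g) :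
    volt T (fun s => f s + c * g s) = fun s => volt T f s + c * volt T g s := by
  funext s
  unfold volt
  rw [← intervalIntegral.integral_const_mul, ← intervalIntegral.integral_add]
  · congr 1; funext x
    rw [← intervalIntegral.integral_const_mul, ← intervalIntegral.integral_add]
    · congr 1; funext y; ring
    · apply Continuous.intervalIntegrable; fun_prop
    · apply Continuous.intervalIntegrable; fun_prop
  · exact (volt_inner_cont T f hf).intervalIntegrable _ _
  · exact ((volt_inner_cont T g hg).const_smul c).intervalIntegrable _ _

lemma iter_lin (T : ℝ) (f g : ℝ → ℂ) (c : ℂ) (hf : Continuous f) (hg : Continuous g) (n : ℕ) :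
    (volt T)^[n] (fun s => f s + c * g s) = fun s => (volt T)^[n] f s + c * (volt T)^[n] g s := by
  induction n with
  | zero => rfl
  | succ n ih =>
    simp only [Function.iterate_succ_apply']
    rw [ih, volt_lin T _ _ c (iter_cont T f hf n) (iter_cont T g hg n)]

lemma volt_expand (T : ℝ) (z : ℝ → ℂ) (hz : Continuous z) (μ : ℂ)
    (h : ∀ s, z s = 1 - μ * volt T z s) (N : ℕ) (s : ℝ) :
    z s = ∑ n ∈ Finset.range N, (-μ) ^ n * (volt T)^[n] (fun _ => 1) s
      + (-μ) ^ N * (volt T)^[N] z s := by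
  induction N with
  | zero => simp
  | succ N ih =>
    rw [Finset.sum_range_succ, ih, add_assoc]
    congr 1
    have hz' : z = fun s => (fun _ => (1:ℂ)) s + (-μ) * volt T z s := by
      funext s; rw [h s]; ring
    have := congrFun (iter_lin T (fun _ => 1) (volt T z) (-μ) continuous_const
      (volt_cont T z hz) N) s
    rw [← hz'] at this
    rw [this, Function.iterate_succ_apply]
    ring

lemma volt_hasSum (T : ℝ) (hT : 0 ≤ T) (z : ℝ → ℂ) (hz : Continuous z) (μ : ℂ)
    (h : ∀ s, z s = 1 - μ * volt T z s) :
    HasSum (fun n : ℕ => (-μ) ^ n * (volt T)^[n] (fun _ => 1) T) (z T) := by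
  obtain ⟨M, hM⟩ := (isCompact_Icc (a := -T) (b := T)).exists_bound_of_continuousOn hz.continuousOn
  have base : Summable fun n : ℕ => (‖μ‖ + 1) ^ (2 * n) * (T + T) ^ (2 * n) / (2 * n).factorial := by
    have := Real.summable_pow_div_factorial ((‖μ‖ + 1) * (T + T))
    have := this.comp_injective (i := fun n : ℕ => 2 * n) (fun a b h => by simpa using h)
    refine this.congr fun n => ?_
    simp [mul_pow]
  have hpow : ∀ n : ℕ, ‖μ‖ ^ n ≤ (‖μ‖ + 1) ^ (2 * n) := by
    intro n
    calc ‖μ‖ ^ n ≤ (‖μ‖ + 1) ^ n := by gcongr; linarith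
      _ ≤ (‖μ‖ + 1) ^ (2 * n) := by
        apply pow_le_pow_right₀ <;> [linarith [norm_nonneg μ]; omega]
  have hgen : ∀ (g : ℝ → ℂ) (M : ℝ), Continuous g → (∀ s, -T ≤ s → s ≤ T → ‖g s‖ ≤ M) →
      ∀ n : ℕ, ‖(-μ) ^ n * (volt T)^[n] g T‖ ≤
        M * ((‖μ‖ + 1) ^ (2 * n) * (T + T) ^ (2 * n) / (2 * n).factorial) := by
    intro g M hg hM n
    have hM0 : 0 ≤ M := (norm_nonneg _).trans (hM T (by linarith) le_rfl)
    have := iter_bound T M g hg hM n T (by linarith) le_rfl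
    rw [norm_mul, norm_pow, norm_neg]
    calc ‖μ‖ ^ n * ‖(volt T)^[n] g T‖ ≤ (‖μ‖ + 1) ^ (2 * n) * (M / (2 * n).factorial * (T + T) ^ (2 * n)) := by
          gcongr; exact hpow n
      _ = _ := by ring
  have hs : Summable (fun n : ℕ => (-μ) ^ n * (volt T)^[n] (fun _ => 1) T) := by
    refine Summable.of_norm_bounded (base.mul_left 1) (hgen (fun _ => 1) 1 continuous_const ?_)
    intro s _ _; simp
  rw [hs.hasSum_iff_tendsto_nat]
  have h0 : Tendsto (fun N => (-μ) ^ N * (volt T)^[N] z T) atTop (𝓝 0) := by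
    apply squeeze_zero_norm (hgen z M hz (fun s h1 h2 => hM s ⟨h1, h2⟩))
    simpa using (base.tendsto_atTop_zero).const_mul M
  have := (tendsto_const_nhds (x := z T)).sub h0
  rw [sub_zero] at this
  refine this.congr fun N => ?_
  have := volt_expand T z hz μ h N T
  rw [sub_eq_iff_eq_add]; exact this


lemma volt3_eq (T : ℝ) : (volt T)^[3] (fun _ => 1) T =
   ((∫ s₁ in (-T)..T, ∫ s₂ in (-T)..s₁, ∫ s₃ in (-T)..s₂, ∫ s₄ in (-T)..s₃,
          ∫ s₅ in (-T)..s₄, ∫ s₆ in (-T)..s₅,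
          Real.cos (s₁ ^ 2 - s₂ ^ 2) * Real.cos (s₃ ^ 2 - s₄ ^ 2) *
            Real.cos (s₅ ^ 2 - s₆ ^ 2) : ℝ) : ℂ) := by
  simp only [Function.iterate_succ, Function.iterate_zero, Function.comp, id, volt, mul_one,
    intervalIntegral.integral_const_mul, mul_assoc, intervalIntegral.integral_ofReal,
    ← Complex.ofReal_mul]

/-- first-order system, with all functions on the line -/
structure Sys (lam : ℂ) (a b a' b' : ℝ → ℂ) : Prop where
  ha : ∀ s : ℝ, HasDerivAt a (-lam * Complex.exp (Complex.I * s ^ 2) * b s) s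
  hb : ∀ s : ℝ, HasDerivAt b (Complex.exp (-Complex.I * s ^ 2) * a s) s
  ha' : ∀ s : ℝ, HasDerivAt a' (-lam * Complex.exp (-Complex.I * s ^ 2) * b' s) s
  hb' : ∀ s : ℝ, HasDerivAt b' (Complex.exp (Complex.I * s ^ 2) * a' s) s

lemma Sys.cont_a {lam : ℂ} {a b a' b' : ℝ → ℂ} (h : Sys lam a b a' b') : Continuous a :=
  continuous_iff_continuousAt.2 fun s => (h.ha s).continuousAt
lemma Sys.cont_b {lam : ℂ} {a b a' b' : ℝ → ℂ} (h : Sys lam a b a' b') : Continuous b :=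
  continuous_iff_continuousAt.2 fun s => (h.hb s).continuousAt
lemma Sys.cont_a' {lam : ℂ} {a b a' b' : ℝ → ℂ} (h : Sys lam a b a' b') : Continuous a' :=
  continuous_iff_continuousAt.2 fun s => (h.ha' s).continuousAt
lemma Sys.cont_b' {lam : ℂ} {a b a' b' : ℝ → ℂ} (h : Sys lam a b a' b') : Continuous b' :=
  continuous_iff_continuousAt.2 fun s => (h.hb' s).continuousAt

lemma Sys.conserve {lam : ℂ} {a b a' b' : ℝ → ℂ} (h : Sys lam a b a' b') (s t : ℝ) :
    a s * a' s + lam * (b s * b' s) = a t * a' t + lam * (b t * b' t) := by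
  have hd : ∀ s : ℝ, HasDerivAt (fun s => a s * a' s + lam * (b s * b' s)) 0 s := by
    intro s
    have := ((h.ha s).mul (h.ha' s)).add (((h.hb s).mul (h.hb' s)).const_mul lam)
    refine this.congr_deriv ?_
    ring
  exact is_const_of_deriv_eq_zero (fun s => (hd s).differentiableAt) (fun s => (hd s).deriv) s t

lemma exp_cancel (x y : ℝ) (z : ℂ) :
    Complex.exp (Complex.I * x ^ 2) * (Complex.exp (-Complex.I * y ^ 2) * z) +
      Complex.exp (-Complex.I * x ^ 2) * (Complex.exp (Complex.I * y ^ 2) * z) =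
    2 * ((Real.cos (x ^ 2 - y ^ 2) : ℂ) * z) := by
  rw [← mul_assoc, ← mul_assoc, ← Complex.exp_add, ← Complex.exp_add]
  push_cast
  rw [Complex.cos]
  rw [show Complex.I * (x:ℂ) ^ 2 + -Complex.I * (y:ℂ) ^ 2 = ((x:ℂ)^2 - (y:ℂ)^2) * Complex.I by ring,
    show -Complex.I * (x:ℂ) ^ 2 + Complex.I * (y:ℂ) ^ 2 = -((x:ℂ)^2 - (y:ℂ)^2) * Complex.I by ring]
  ring

lemma Sys.volterra {lam : ℂ} {a b a' b' : ℝ → ℂ} (h : Sys lam a b a' b') (T : ℝ)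
    (a1 : a (-T) = 1) (b0 : b (-T) = 0) (a1' : a' (-T) = 1) (b0' : b' (-T) = 0) (s : ℝ) :
    a s * a' s - lam * (b s * b' s) = 1 - (4 * lam) *
      volt T (fun s => a s * a' s - lam * (b s * b' s)) s := by
  have ca := h.cont_a
  have cb := h.cont_b
  have ca' := h.cont_a'
  have cb' := h.cont_b'
  set z : ℝ → ℂ := fun s => a s * a' s - lam * (b s * b' s) with hz
  have cz : Continuous z := by fun_prop
  have hp : ∀ x, ∫ y in (-T)..x, Complex.exp (-Complex.I * y ^ 2) * z y = b x * a' x := by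
    intro x
    rw [intervalIntegral.integral_eq_sub_of_hasDerivAt (f := fun x => b x * a' x)]
    · simp [b0]
    · intro y _
      refine ((h.hb y).mul (h.ha' y)).congr_deriv ?_
      simp only [hz]; ring
    · apply Continuous.intervalIntegrable; fun_prop
  have hq : ∀ x, ∫ y in (-T)..x, Complex.exp (Complex.I * y ^ 2) * z y = a x * b' x := by
    intro x
    rw [intervalIntegral.integral_eq_sub_of_hasDerivAt (f := fun x => a x * b' x)]
    · simp [b0']
    · intro y _
      refine ((h.ha y).mul (h.hb' y)).congr_deriv ?_
      simp only [hz]; ring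
    · apply Continuous.intervalIntegrable; fun_prop
  have hin : ∀ x : ℝ, ∫ y in (-T)..x, (Real.cos (x ^ 2 - y ^ 2) : ℂ) * z y =
      (1/2) * (Complex.exp (Complex.I * x ^ 2) * (b x * a' x) +
        Complex.exp (-Complex.I * x ^ 2) * (a x * b' x)) := by
    intro x
    rw [← hp, ← hq, ← intervalIntegral.integral_const_mul, ← intervalIntegral.integral_const_mul,
      ← intervalIntegral.integral_add, ← intervalIntegral.integral_const_mul]
    · congr 1; funext y
      rw [exp_cancel]; ring
    · apply Continuous.intervalIntegrable; fun_prop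
    · apply Continuous.intervalIntegrable; fun_prop
  have hzs : ∫ x in (-T)..s, (-2 * lam) * (Complex.exp (Complex.I * x ^ 2) * (b x * a' x) +
        Complex.exp (-Complex.I * x ^ 2) * (a x * b' x)) = z s - z (-T) := by
    apply intervalIntegral.integral_eq_sub_of_hasDerivAt
    · intro y _
      refine (((h.ha y).mul (h.ha' y)).sub (((h.hb y).mul (h.hb' y)).const_mul lam)).congr_deriv ?_
      ring
    · apply Continuous.intervalIntegrable; fun_prop
  have hz1 : z (-T) = 1 := by simp [hz, a1, a1', b0]
  have : volt T z s = (1/2) * ∫ x in (-T)..s, (Complex.exp (Complex.I * x ^ 2) * (b x * a' x) +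
        Complex.exp (-Complex.I * x ^ 2) * (a x * b' x)) := by
    unfold volt
    simp only [hin]
    rw [intervalIntegral.integral_const_mul]
  rw [intervalIntegral.integral_const_mul, hz1] at hzs
  rw [this]
  change z s = _
  linear_combination -hzs

/-- from the system based at `0` to the system based at `-T`. -/
lemma Sys.exists_z {lam : ℂ} {a b a' b' : ℝ → ℂ} (h : Sys lam a b a' b') (T : ℝ)
    (a1 : a 0 = 1) (b0 : b 0 = 0) (a1' : a' 0 = 1)
    (ea : ∀ s, a (-s) = a s) (eb : ∀ s, b (-s) = - b s)
    (ea' : ∀ s, a' (-s) = a' s) (eb' : ∀ s, b' (-s) = - b' s) :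
    ∃ z : ℝ → ℂ, Continuous z ∧ (∀ s, z s = 1 - (4 * lam) * volt T z s) ∧
      z T = 2 * (1 - 2 * lam * (b T * b' T)) ^ 2 - 1 := by
  have ca := h.cont_a
  have cb := h.cont_b
  have ca' := h.cont_a'
  have cb' := h.cont_b'
  have hc : a T * a' T + lam * (b T * b' T) = 1 := by
    rw [h.conserve T 0, a1, a1', b0]; ring
  have S : Sys lam (fun s => a' T * a s - lam * (b T * b' s)) (fun s => a' T * b s + b T * a' s)
      (fun s => a T * a' s - lam * (b' T * b s)) (fun s => a T * b' s + b' T * a s) := by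
    constructor
    · intro s
      refine (((h.ha s).const_mul _).sub (((h.hb' s).const_mul _).const_mul _)).congr_deriv ?_
      ring
    · intro s
      refine (((h.hb s).const_mul _).add ((h.ha' s).const_mul _)).congr_deriv ?_
      ring
    · intro s
      refine (((h.ha' s).const_mul _).sub (((h.hb s).const_mul _).const_mul _)).congr_deriv ?_
      ring
    · intro s
      refine (((h.hb' s).const_mul _).add ((h.ha s).const_mul _)).congr_deriv ?_
      ring
  have V := S.volterra T (by simp only [ea, eb']; linear_combination hc)
    (by simp only [ea', eb]; ring) (by simp only [ea', eb]; linear_combination hc)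
    (by simp only [ea, eb']; ring)
  refine ⟨_, ?_, V, ?_⟩
  · have := S.cont_a
    have := S.cont_b
    have := S.cont_a'
    have := S.cont_b'
    fun_prop
  · have h1 : a T * a' T = 1 - lam * (b T * b' T) := by linear_combination hc
    linear_combination (a T * a' T - lam * (b T * b' T) + (1 - 2 * lam * (b T * b' T)) - 4 * lam * (b T * b' T)) * h1


/-- the beta weight -/
noncomputable def wt (u : ℂ) (t : ℝ) : ℂ := (t : ℂ) ^ (u - 1) * (1 - (t : ℂ)) ^ (3 / 2 - u - 1)

noncomputable def Mom (κ u : ℂ) (j : ℕ) (s : ℝ) : ℂ :=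
  ∫ t in (0:ℝ)..1, ((t : ℂ) ^ j * Complex.exp (-κ * s ^ 2 * t)) * wt u t

lemma wt_int {u : ℂ} (h0 : 0 < u.re) (h1 : u.re < 3 / 2) :
    IntervalIntegrable (wt u) volume 0 1 := by
  apply Complex.betaIntegral_convergent h0
  simp; linarith

lemma mom_integrable {u : ℂ} (h0 : 0 < u.re) (h1 : u.re < 3 / 2) (κ : ℂ) (j : ℕ) (s : ℝ) :
    IntervalIntegrable (fun t : ℝ => ((t : ℂ) ^ j * Complex.exp (-κ * s ^ 2 * t)) * wt u t)
      volume 0 1 := by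
  apply (wt_int h0 h1).continuousOn_mul
  fun_prop

lemma mom_deriv {u : ℂ} (h0 : 0 < u.re) (h1 : u.re < 3 / 2) (κ : ℂ) (j : ℕ) (s : ℝ) :
    HasDerivAt (Mom κ u j) (-2 * κ * s * Mom κ u (j + 1) s) s := by
  have hmain := intervalIntegral.hasDerivAt_integral_of_dominated_loc_of_deriv_le
    (μ := volume) (a := 0) (b := 1) (x₀ := s) (s := Metric.ball s 1)
    (F := fun (s t : ℝ) => ((t : ℂ) ^ j * Complex.exp (-κ * s ^ 2 * t)) * wt u t)
    (F' := fun (s t : ℝ) => -2 * κ * s * (((t : ℂ) ^ (j + 1) * Complex.exp (-κ * s ^ 2 * t)) * wt u t))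
    (bound := fun t => (2 * ‖κ‖ * (|s| + 1) * Real.exp (‖κ‖ * (|s| + 1) ^ 2)) * ‖wt u t‖)
    (Metric.ball_mem_nhds s one_pos)
    (Eventually.of_forall fun x => by
      have := (mom_integrable h0 h1 κ j x).aestronglyMeasurable
      rwa [Set.uIoc_of_le zero_le_one])
    (mom_integrable h0 h1 κ j s)
    (by
      have := ((mom_integrable h0 h1 κ (j + 1) s).const_mul (-2 * κ * s)).aestronglyMeasurable
      rwa [Set.uIoc_of_le zero_le_one])
    ?_ ((wt_int h0 h1).norm.const_mul _) ?_
  · have h2 := hmain.2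
    rw [intervalIntegral.integral_const_mul] at h2
    exact h2
  · refine Eventually.of_forall fun t ht x hx => ?_
    rw [Set.uIoc_of_le zero_le_one] at ht
    have hx' : |x| ≤ |s| + 1 := by
      have : |x - s| < 1 := by simpa [Real.dist_eq] using hx
      have := abs_add_le (x - s) s
      rw [sub_add_cancel] at this
      linarith
    have ht1 : ‖(t : ℂ)‖ ≤ 1 := by
      rw [Complex.norm_real, Real.norm_eq_abs, abs_of_pos ht.1]; exact ht.2
    have ht2 : ‖(t : ℂ) ^ (j + 1)‖ ≤ 1 := by
      rw [norm_pow]; exact pow_le_one₀ (norm_nonneg _) ht1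
    have he : ‖Complex.exp (-κ * x ^ 2 * t)‖ ≤ Real.exp (‖κ‖ * (|s| + 1) ^ 2) := by
      refine (Complex.norm_exp_le_exp_norm _).trans (Real.exp_le_exp.2 ?_)
      rw [norm_mul, norm_mul, norm_neg, norm_pow, Complex.norm_real x, Real.norm_eq_abs]
      calc ‖κ‖ * |x| ^ 2 * ‖(t:ℂ)‖ ≤ ‖κ‖ * (|s| + 1) ^ 2 * 1 := by gcongr
        _ = _ := by ring
    rw [norm_mul, norm_mul, norm_mul, norm_mul, norm_mul, Complex.norm_real x, Real.norm_eq_abs]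
    simp only [norm_neg, Complex.norm_ofNat]
    calc 2 * ‖κ‖ * |x| * (‖(t : ℂ) ^ (j + 1)‖ * ‖Complex.exp (-κ * x ^ 2 * t)‖ * ‖wt u t‖)
        ≤ 2 * ‖κ‖ * (|s| + 1) * (1 * Real.exp (‖κ‖ * (|s| + 1) ^ 2) * ‖wt u t‖) := by gcongr
      _ = _ := by ring
  · refine Eventually.of_forall fun t ht x hx => ?_
    have hx1 : HasDerivAt (fun x : ℝ => (x : ℂ)) 1 x := Complex.ofRealCLM.hasDerivAt
    have := ((((hx1.pow 2).const_mul (-κ)).mul_const (t : ℂ)).cexp.const_mul ((t:ℂ) ^ j)).mul_const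
      (wt u t)
    refine this.congr_deriv ?_
    simp
    ring

lemma mom_rel {u : ℂ} (h0 : 0 < u.re) (h1 : u.re < 3 / 2) (κ : ℂ) (s : ℝ) :
    -κ * s ^ 2 * (Mom κ u 1 s - Mom κ u 2 s) + u * Mom κ u 0 s - (3 / 2) * Mom κ u 1 s = 0 := by
  have i0 := mom_integrable h0 h1 κ 0 s
  have i1 := mom_integrable h0 h1 κ 1 s
  have i2 := mom_integrable h0 h1 κ 2 s
  have key := intervalIntegral.integral_eq_sub_of_hasDerivAt_of_le (zero_le_one (α := ℝ))
    (f := fun t : ℝ => Complex.exp (-κ * s ^ 2 * t) * ((t:ℂ) ^ u * (1 - (t:ℂ)) ^ (3 / 2 - u)))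
    (f' := fun t : ℝ => -κ * s ^ 2 * (((t : ℂ) ^ 1 * Complex.exp (-κ * s ^ 2 * t)) * wt u t
      - ((t : ℂ) ^ 2 * Complex.exp (-κ * s ^ 2 * t)) * wt u t)
      + u * (((t : ℂ) ^ 0 * Complex.exp (-κ * s ^ 2 * t)) * wt u t)
      - (3 / 2) * (((t : ℂ) ^ 1 * Complex.exp (-κ * s ^ 2 * t)) * wt u t))
    ?_ ?_ ((((i1.sub i2).const_mul _).add (i0.const_mul _)).sub (i1.const_mul _))
  · rw [intervalIntegral.integral_sub (((i1.sub i2).const_mul _).add (i0.const_mul _)) (i1.const_mul _),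
      intervalIntegral.integral_add ((i1.sub i2).const_mul _) (i0.const_mul _),
      intervalIntegral.integral_const_mul, intervalIntegral.integral_const_mul,
      intervalIntegral.integral_const_mul, intervalIntegral.integral_sub i1 i2] at key
    change -κ * s ^ 2 * (Mom κ u 1 s - Mom κ u 2 s) + u * Mom κ u 0 s - (3 / 2) * Mom κ u 1 s = _ at key
    rw [key]
    have hu : u ≠ 0 := by rintro rfl; simp at h0
    have hv : 3 / 2 - u ≠ 0 := by
      intro h
      have := congrArg Complex.re h
      simp at this; linarith
    simp [Complex.zero_cpow hu, Complex.zero_cpow hv]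
  · apply Continuous.continuousOn
    have c1 : Continuous fun t : ℝ => (t : ℂ) ^ u :=
      Complex.continuous_ofReal_cpow_const h0
    have c2 : Continuous fun t : ℝ => (1 - (t : ℂ)) ^ (3 / 2 - u) := by
      have := (Complex.continuous_ofReal_cpow_const (y := 3/2 - u) (by simp; linarith)).comp
        (continuous_const.sub continuous_id : Continuous fun t : ℝ => 1 - t)
      refine this.congr fun t => ?_
      simp
    fun_prop
  · intro t ht
    have hx1 : HasDerivAt (fun x : ℝ => (x : ℂ)) 1 t := Complex.ofRealCLM.hasDerivAt
    have htc : (t : ℂ) ≠ 0 := by exact_mod_cast ht.1.ne'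
    have h1t : (1 - (t:ℂ)) ≠ 0 := by
      have : (1 - t) ≠ 0 := by linarith [ht.2]
      exact_mod_cast this
    have d1 : HasDerivAt (fun t : ℝ => (t : ℂ) ^ u) (u * (t:ℂ) ^ (u - 1) * 1) t :=
      ((hasDerivAt_id (t:ℂ)).cpow_const (c := u) (Or.inl (by simpa using ht.1))).comp_ofReal
    have d2 : HasDerivAt (fun t : ℝ => (1 - (t : ℂ)) ^ (3 / 2 - u))
      ((3 / 2 - u) * (1 - (t : ℂ)) ^ (3 / 2 - u - 1) * (-1)) t :=
      (((hasDerivAt_id (t:ℂ)).const_sub 1).cpow_const (c := 3/2 - u)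
        (Or.inl (by simpa using ht.2))).comp_ofReal
    have := ((hx1.const_mul (-κ * s ^ 2)).cexp).mul (d1.mul d2)
    refine this.congr_deriv ?_
    have e1 : (t:ℂ) ^ u = (t:ℂ) ^ (u - 1) * t := by
      rw [Complex.cpow_sub _ _ htc, Complex.cpow_one]; field_simp
    have e2 : (1 - (t : ℂ)) ^ (3 / 2 - u) = (1 - (t : ℂ)) ^ (3 / 2 - u - 1) * (1 - t) := by
      rw [Complex.cpow_sub (3 / 2 - u) 1 h1t, Complex.cpow_one]; field_simp
    simp only [Pi.mul_apply]
    rw [e1, e2]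
    unfold wt
    ring

noncomputable def bf (κ u : ℂ) (s : ℝ) : ℂ := s * Mom κ u 0 s / Complex.betaIntegral u (3 / 2 - u)

noncomputable def af (κ u : ℂ) (s : ℝ) : ℂ := Complex.exp (κ * s ^ 2) *
  ((Mom κ u 0 s - 2 * κ * s ^ 2 * Mom κ u 1 s) / Complex.betaIntegral u (3 / 2 - u))

lemma bf_deriv {u : ℂ} (h0 : 0 < u.re) (h1 : u.re < 3 / 2) (κ : ℂ) (s : ℝ) :
    HasDerivAt (bf κ u) (Complex.exp (-κ * s ^ 2) * af κ u s) s := by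
  have hx1 : HasDerivAt (fun x : ℝ => (x : ℂ)) 1 s := Complex.ofRealCLM.hasDerivAt
  refine ((hx1.mul (mom_deriv h0 h1 κ 0 s)).div_const _).congr_deriv ?_
  unfold af
  have he : Complex.exp (-κ * s ^ 2) * Complex.exp (κ * s ^ 2) = 1 := by
    rw [← Complex.exp_add, neg_mul, neg_add_cancel, Complex.exp_zero]
  linear_combination (-(Mom κ u 0 s - 2 * κ * s ^ 2 * Mom κ u 1 s) /
    Complex.betaIntegral u (3 / 2 - u)) * he

lemma af_deriv {u : ℂ} (h0 : 0 < u.re) (h1 : u.re < 3 / 2) (κ : ℂ) (s : ℝ) :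
    HasDerivAt (af κ u) (-(4 * κ * (u - 1 / 2)) * Complex.exp (κ * s ^ 2) * bf κ u s) s := by
  have hx1 : HasDerivAt (fun x : ℝ => (x : ℂ)) 1 s := Complex.ofRealCLM.hasDerivAt
  have := (((hx1.pow 2).const_mul κ).cexp).mul (((mom_deriv h0 h1 κ 0 s).sub
    (((hx1.pow 2).const_mul (2 * κ)).mul (mom_deriv h0 h1 κ 1 s))).div_const
      (Complex.betaIntegral u (3 / 2 - u)))
  refine this.congr_deriv ?_
  have hr := mom_rel h0 h1 κ s
  unfold bf
  simp
  linear_combination (4 * κ * s * Complex.exp (κ * s ^ 2) / Complex.betaIntegral u (3 / 2 - u)) * hr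

lemma mom_even (κ u : ℂ) (j : ℕ) (s : ℝ) : Mom κ u j (-s) = Mom κ u j s := by
  unfold Mom; simp

lemma beta_eq (κ u : ℂ) : Mom κ u 0 0 = Complex.betaIntegral u (3 / 2 - u) := by
  unfold Mom Complex.betaIntegral wt; simp


/-- the parameter range used throughout -/
structure Good (u : ℂ) : Prop where
  lo : 3 / 8 ≤ u.re
  hi : u.re ≤ 5 / 8
  im : |u.im| ≤ 1

lemma ncpow (z w : ℂ) (hw : |w.im| ≤ 1) : ‖z ^ w‖ ≤ ‖z‖ ^ w.re * Real.exp π := by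
  refine (Complex.norm_cpow_le z w).trans ?_
  rw [div_eq_mul_inv, ← Real.exp_neg]
  gcongr
  have h1 := Complex.abs_arg_le_pi z
  have : |z.arg * w.im| ≤ π * 1 := by
    rw [abs_mul]; gcongr
  linarith [neg_abs_le (z.arg * w.im)]

lemma Good.im1 {u : ℂ} (h : Good u) : |(u - 1).im| ≤ 1 := by simpa using h.im
lemma Good.im2 {u : ℂ} (h : Good u) : |(3 / 2 - u - 1).im| ≤ 1 := by simpa using h.im
lemma re1 (u : ℂ) : (u - 1).re = u.re - 1 := by simp
lemma re2 (u : ℂ) : (3 / 2 - u - 1).re = 1 / 2 - u.re := by simp; ring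

noncomputable def Dom (σ : ℝ) : ℝ := Real.exp (-σ) * σ ^ ((3 / 8 : ℝ) - 1) + Real.exp (-σ) * σ ^ ((2 : ℝ) - 1)

lemma dom_int : IntegrableOn Dom (Set.Ioi 0) :=
  (Real.GammaIntegral_convergent (by norm_num)).add (Real.GammaIntegral_convergent (by norm_num))

lemma rpow_le_dom {σ p : ℝ} (hσ : 0 < σ) (h1 : -(5 / 8) ≤ p) (h2 : p ≤ 1) :
    Real.exp (-σ) * σ ^ p ≤ Dom σ := by
  unfold Dom
  rw [← mul_add]
  gcongr
  rcases le_total σ 1 with h | h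
  · have := Real.rpow_le_rpow_of_exponent_ge hσ h (show (3 / 8 : ℝ) - 1 ≤ p by linarith)
    exact this.trans (le_add_of_nonneg_right (by positivity))
  · have := Real.rpow_le_rpow_of_exponent_le h (show p ≤ (2:ℝ) - 1 by linarith)
    exact this.trans (le_add_of_nonneg_left (by positivity))

noncomputable def hA (x : ℝ) (u : ℂ) (σ : ℝ) : ℂ :=
  (Real.exp (-σ) : ℂ) * (σ : ℂ) ^ (u - 1) * (1 + Complex.I * ((σ / x : ℝ) : ℂ)) ^ (3 / 2 - u - 1)
noncomputable def hB (x : ℝ) (u : ℂ) (σ : ℝ) : ℂ :=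
  (Real.exp (-σ) : ℂ) * (1 - Complex.I * ((σ / x : ℝ) : ℂ)) ^ (u - 1) * (σ : ℂ) ^ (3 / 2 - u - 1)

lemma norm_one_add (r : ℝ) : 1 ≤ ‖1 + Complex.I * (r : ℂ)‖ := by
  have := Complex.abs_re_le_norm (1 + Complex.I * (r : ℂ))
  simpa using this
lemma norm_one_sub (r : ℝ) : 1 ≤ ‖1 - Complex.I * (r : ℂ)‖ := by
  have := Complex.abs_re_le_norm (1 - Complex.I * (r : ℂ))
  simpa using this

lemma hA_bound {x : ℝ} (hx : 1 ≤ x) {u : ℂ} (h : Good u) {σ : ℝ} (hσ : 0 < σ) :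
    ‖hA x u σ‖ ≤ 2 * Real.exp π ^ 2 * Dom σ := by
  unfold hA
  have hlo := h.lo
  have hhi := h.hi
  rw [norm_mul, norm_mul, Complex.norm_real, Real.norm_eq_abs, abs_of_pos (Real.exp_pos _)]
  have e1 : ‖(σ:ℂ) ^ (u - 1)‖ ≤ σ ^ (u.re - 1) * Real.exp π := by
    have := ncpow (σ:ℂ) (u - 1) h.im1
    rwa [re1, Complex.norm_real, Real.norm_eq_abs, abs_of_pos hσ] at this
  have e2 : ‖(1 + Complex.I * ((σ / x : ℝ) : ℂ)) ^ (3 / 2 - u - 1)‖ ≤ (1 + σ) * Real.exp π := by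
    refine (ncpow _ _ h.im2).trans ?_
    rw [re2]
    gcongr
    have h1 := norm_one_add (σ / x)
    have h2 : ‖1 + Complex.I * ((σ / x : ℝ) : ℂ)‖ ≤ 1 + σ := by
      refine (norm_add_le _ _).trans ?_
      rw [norm_one, norm_mul, Complex.norm_I, one_mul, Complex.norm_real, Real.norm_eq_abs,
        abs_of_nonneg (by positivity)]
      gcongr
      exact div_le_self hσ.le hx
    refine le_trans ?_ h2
    have := Real.rpow_le_rpow_of_exponent_le h1 (show 1 / 2 - u.re ≤ 1 by linarith)
    rwa [Real.rpow_one] at this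
  calc Real.exp (-σ) * ‖(σ:ℂ) ^ (u - 1)‖ * ‖(1 + Complex.I * ((σ / x : ℝ) : ℂ)) ^ (3 / 2 - u - 1)‖
      ≤ Real.exp (-σ) * (σ ^ (u.re - 1) * Real.exp π) * ((1 + σ) * Real.exp π) := by gcongr
    _ = Real.exp π ^ 2 * (Real.exp (-σ) * σ ^ (u.re - 1) + Real.exp (-σ) * (σ ^ (u.re - 1) * σ)) := by ring
    _ ≤ Real.exp π ^ 2 * (Dom σ + Dom σ) := by
        gcongr
        · exact rpow_le_dom hσ (by linarith) (by linarith)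
        · rw [← Real.rpow_add_one hσ.ne']
          exact rpow_le_dom hσ (by linarith) (by linarith)
    _ = _ := by ring

lemma hB_bound (x : ℝ) {u : ℂ} (h : Good u) {σ : ℝ} (hσ : 0 < σ) :
    ‖hB x u σ‖ ≤ Real.exp π ^ 2 * Dom σ := by
  unfold hB
  have hlo := h.lo
  have hhi := h.hi
  rw [norm_mul, norm_mul, Complex.norm_real, Real.norm_eq_abs, abs_of_pos (Real.exp_pos _)]
  have e1 : ‖(σ:ℂ) ^ (3 / 2 - u - 1)‖ ≤ σ ^ (1 / 2 - u.re) * Real.exp π := by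
    have := ncpow (σ:ℂ) (3 / 2 - u - 1) h.im2
    rwa [re2, Complex.norm_real, Real.norm_eq_abs, abs_of_pos hσ] at this
  have e2 : ‖(1 - Complex.I * ((σ / x : ℝ) : ℂ)) ^ (u - 1)‖ ≤ 1 * Real.exp π := by
    refine (ncpow _ _ h.im1).trans ?_
    rw [re1]
    gcongr
    exact Real.rpow_le_one_of_one_le_of_nonpos (norm_one_sub _) (by linarith)
  calc Real.exp (-σ) * ‖(1 - Complex.I * ((σ / x : ℝ) : ℂ)) ^ (u - 1)‖ * ‖(σ:ℂ) ^ (3 / 2 - u - 1)‖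
      ≤ Real.exp (-σ) * (1 * Real.exp π) * (σ ^ (1 / 2 - u.re) * Real.exp π) := by gcongr
    _ = Real.exp π ^ 2 * (Real.exp (-σ) * σ ^ (1 / 2 - u.re)) := by ring
    _ ≤ _ := by
        gcongr
        exact rpow_le_dom hσ (by linarith) (by linarith)

lemma hA_meas (x : ℝ) (u : ℂ) : AEStronglyMeasurable (hA x u) (volume.restrict (Set.Ioi 0)) := by
  apply Measurable.aestronglyMeasurable
  unfold hA
  fun_prop

lemma hB_meas (x : ℝ) (u : ℂ) : AEStronglyMeasurable (hB x u) (volume.restrict (Set.Ioi 0)) := by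
  apply Measurable.aestronglyMeasurable
  unfold hB
  fun_prop

lemma hA_int {x : ℝ} (hx : 1 ≤ x) {u : ℂ} (h : Good u) : IntegrableOn (hA x u) (Set.Ioi 0) := by
  refine Integrable.mono' (dom_int.const_mul (2 * Real.exp π ^ 2)) (hA_meas x u) ?_
  exact (ae_restrict_mem measurableSet_Ioi).mono fun σ hσ => hA_bound hx h hσ

lemma hB_int (x : ℝ) {u : ℂ} (h : Good u) : IntegrableOn (hB x u) (Set.Ioi 0) := by
  refine Integrable.mono' (dom_int.const_mul (Real.exp π ^ 2)) (hB_meas x u) ?_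
  exact (ae_restrict_mem measurableSet_Ioi).mono fun σ hσ => hB_bound x h hσ

noncomputable def CD : ℝ := 2 * Real.exp π ^ 2 * ∫ σ in Set.Ioi 0, Dom σ

lemma dom_nonneg : 0 ≤ ∫ σ in Set.Ioi 0, Dom σ := by
  refine setIntegral_nonneg measurableSet_Ioi fun σ hσ => ?_
  have : 0 < σ := hσ
  unfold Dom; positivity

lemma IA_bound {x : ℝ} (hx : 1 ≤ x) {u : ℂ} (h : Good u) : ‖∫ σ in Set.Ioi 0, hA x u σ‖ ≤ CD := by
  unfold CD
  rw [← MeasureTheory.integral_const_mul]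
  refine norm_integral_le_of_norm_le (dom_int.const_mul _) ?_
  exact (ae_restrict_mem measurableSet_Ioi).mono fun σ hσ => hA_bound hx h hσ

lemma IB_bound (x : ℝ) {u : ℂ} (h : Good u) : ‖∫ σ in Set.Ioi 0, hB x u σ‖ ≤ CD := by
  have : ‖∫ σ in Set.Ioi 0, hB x u σ‖ ≤ Real.exp π ^ 2 * ∫ σ in Set.Ioi 0, Dom σ := by
    rw [← MeasureTheory.integral_const_mul]
    refine norm_integral_le_of_norm_le (dom_int.const_mul _) ?_
    exact (ae_restrict_mem measurableSet_Ioi).mono fun σ hσ => hB_bound x h hσ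
  refine this.trans ?_
  unfold CD
  have := dom_nonneg
  nlinarith [mul_nonneg (sq_nonneg (Real.exp π)) this]

lemma IA_tendsto {u : ℂ} (h : Good u) :
    Tendsto (fun x => ∫ σ in Set.Ioi 0, hA x u σ) atTop (𝓝 (Complex.Gamma u)) := by
  have hlo := h.lo
  rw [Complex.Gamma_eq_integral (by linarith), Complex.GammaIntegral]
  refine tendsto_integral_filter_of_dominated_convergence (fun σ => 2 * Real.exp π ^ 2 * Dom σ)
    (Eventually.of_forall fun x => hA_meas x u) ?_ (dom_int.const_mul _) ?_
  · filter_upwards [eventually_ge_atTop 1] with x hx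
    exact (ae_restrict_mem measurableSet_Ioi).mono fun σ hσ => hA_bound hx h hσ
  · refine Eventually.of_forall fun σ => ?_
    unfold hA
    have h1 : Tendsto (fun x : ℝ => 1 + Complex.I * ((σ / x : ℝ) : ℂ)) atTop (𝓝 1) := by
      have h0 : Tendsto (fun x : ℝ => σ / x) atTop (𝓝 0) := tendsto_const_nhds.div_atTop tendsto_id
      have := ((Complex.continuous_ofReal.tendsto 0).comp h0).const_mul Complex.I
      simpa using this.const_add 1
    have h2 : Tendsto (fun z : ℂ => z ^ (3 / 2 - u - 1)) (𝓝 1) (𝓝 (1 ^ (3 / 2 - u - 1))) :=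
      (continuousAt_id.cpow continuousAt_const (by simp : (1:ℂ) ∈ Complex.slitPlane)).tendsto
    have h3 := (h2.comp h1).const_mul ((Real.exp (-σ) : ℂ) * (σ : ℂ) ^ (u - 1))
    simpa using h3

/-- the holomorphic integrand -/
noncomputable def fc (x : ℝ) (u z : ℂ) : ℂ :=
  Complex.exp (-Complex.I * x * z) * (z ^ (u - 1) * (1 - z) ^ (3 / 2 - u - 1))

lemma fc_diff (x : ℝ) (u : ℂ) {z : ℂ} (h1 : z ∈ Complex.slitPlane) (h2 : 1 - z ∈ Complex.slitPlane) :
    DifferentiableAt ℂ (fc x u) z := by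
  unfold fc
  have a1 : DifferentiableAt ℂ (fun z : ℂ => z ^ (u - 1)) z :=
    differentiableAt_id.cpow_const h1
  have a2 : DifferentiableAt ℂ (fun z : ℂ => (1 - z) ^ (3 / 2 - u - 1)) z :=
    ((differentiableAt_const _).sub differentiableAt_id).cpow_const h2
  have a3 : DifferentiableAt ℂ (fun z : ℂ => Complex.exp (-Complex.I * x * z)) z := by fun_prop
  exact a3.mul (a1.mul a2)

lemma fc_diff_im (x : ℝ) (u : ℂ) {z : ℂ} (h : z.im < 0) : DifferentiableAt ℂ (fc x u) z :=
  fc_diff x u (Or.inr h.ne) (Or.inr (by simpa using h.ne))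

lemma fc_rect (x : ℝ) (u : ℂ) {ε R : ℝ} (hε : 0 < ε) (hR : 0 < R) :
    (∫ t in (0:ℝ)..1, fc x u (t - ε * Complex.I)) = (∫ t in (0:ℝ)..1, fc x u (t - R * Complex.I))
      + Complex.I * (∫ τ in ε..R, fc x u (1 - τ * Complex.I))
      - Complex.I * (∫ τ in ε..R, fc x u (-τ * Complex.I)) := by
  have := Complex.integral_boundary_rect_eq_zero_of_differentiableOn (fc x u)
    (-R * Complex.I) (1 - ε * Complex.I) ?_
  · simp at this
    have e1 : ∀ g : ℝ → ℂ, ∫ y in (-R)..(-ε), g y = ∫ τ in ε..R, g (-τ) := by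
      intro g; rw [intervalIntegral.integral_comp_neg]
    rw [e1, e1] at this
    simp only [Complex.ofReal_neg, neg_mul, ← sub_eq_add_neg] at this ⊢
    linear_combination -this
  · intro z hz
    refine (fc_diff_im x u ?_).differentiableWithinAt
    have : z.im ∈ Set.uIcc (-R) (-ε) := by simpa using hz.2
    rcases Set.mem_uIcc.1 this with h | h <;> linarith [h.1, h.2]

lemma pos_mul_cpow {r : ℝ} (hr : 0 < r) {z : ℂ} (hz : z ≠ 0) (w : ℂ) :
    ((r : ℂ) * z) ^ w = (r : ℂ) ^ w * z ^ w := by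
  have hr' : (r : ℂ) ≠ 0 := by exact_mod_cast hr.ne'
  rw [Complex.cpow_def_of_ne_zero (mul_ne_zero hr' hz), Complex.cpow_def_of_ne_zero hr',
    Complex.cpow_def_of_ne_zero hz, Complex.log_ofReal_mul hr hz, ← Complex.exp_add,
    Complex.ofReal_log hr.le]
  ring_nf

lemma fc_A {x τ : ℝ} (hx : 0 < x) (hτ : 0 < τ) (u : ℂ) : fc x u (-τ * Complex.I) =
    (-Complex.I) ^ (u - 1) * (x : ℂ) ^ (1 - u) * hA x u (x * τ) := by
  unfold fc hA
  have hx' : (x : ℂ) ≠ 0 := by exact_mod_cast hx.ne'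
  have e1 : Complex.exp (-Complex.I * x * (-τ * Complex.I)) = (Real.exp (-(x * τ)) : ℂ) := by
    push_cast
    congr 1
    linear_combination (x * τ : ℂ) * Complex.I_mul_I
  have e2 : (-τ * Complex.I) ^ (u - 1) = (τ : ℂ) ^ (u - 1) * (-Complex.I) ^ (u - 1) := by
    rw [← pos_mul_cpow hτ (by simp)]; congr 1; ring
  have e3 : (x : ℂ) ^ (1 - u) * ((x * τ : ℝ) : ℂ) ^ (u - 1) = (τ : ℂ) ^ (u - 1) := by
    rw [Complex.ofReal_mul, Complex.mul_cpow_ofReal_nonneg hx.le hτ.le, ← mul_assoc,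
      ← Complex.cpow_add _ _ hx']
    simp
  have e4 : (1 - -τ * Complex.I) = 1 + Complex.I * ((x * τ / x : ℝ) : ℂ) := by
    rw [mul_div_cancel_left₀ _ hx.ne']; ring
  rw [e1, e2, e4, ← e3]
  ring

lemma fc_B {x τ : ℝ} (hx : 0 < x) (hτ : 0 < τ) (u : ℂ) : fc x u (1 - τ * Complex.I) =
    Complex.exp (-Complex.I * x) * Complex.I ^ (3 / 2 - u - 1) * (x : ℂ) ^ (-(3 / 2 - u - 1))
      * hB x u (x * τ) := by
  unfold fc hB
  have hx' : (x : ℂ) ≠ 0 := by exact_mod_cast hx.ne'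
  have e1 : Complex.exp (-Complex.I * x * (1 - τ * Complex.I)) =
      Complex.exp (-Complex.I * x) * (Real.exp (-(x * τ)) : ℂ) := by
    push_cast
    rw [← Complex.exp_add]
    congr 1
    linear_combination (x * τ : ℂ) * Complex.I_mul_I
  have e2 : (1 - (1 - τ * Complex.I)) ^ (3 / 2 - u - 1) =
      (τ : ℂ) ^ (3 / 2 - u - 1) * Complex.I ^ (3 / 2 - u - 1) := by
    rw [← pos_mul_cpow hτ (by simp)]; congr 1; ring
  have e3 : (x : ℂ) ^ (-(3 / 2 - u - 1)) * ((x * τ : ℝ) : ℂ) ^ (3 / 2 - u - 1)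
      = (τ : ℂ) ^ (3 / 2 - u - 1) := by
    rw [Complex.ofReal_mul, Complex.mul_cpow_ofReal_nonneg hx.le hτ.le, ← mul_assoc,
      ← Complex.cpow_add _ _ hx', neg_add_cancel, Complex.cpow_zero, one_mul]
  have e4 : (1 - τ * Complex.I) = 1 - Complex.I * ((x * τ / x : ℝ) : ℂ) := by
    rw [mul_div_cancel_left₀ _ hx.ne']; ring
  rw [e2, e1, ← e3, e4]
  ring

lemma cover_pos : AECover (volume.restrict (Set.Ioi (0:ℝ))) atTop
    (fun n : ℕ => Set.Ioc (1 / ((n:ℝ) + 1)) ((n:ℝ) + 1)) := by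
  refine ⟨?_, fun _ => measurableSet_Ioc⟩
  refine (ae_restrict_mem measurableSet_Ioi).mono fun t ht => ?_
  have ht : 0 < t := ht
  have h1 := (tendsto_one_div_add_atTop_nhds_zero_nat (𝕜 := ℝ)).eventually (gt_mem_nhds ht)
  have h2 := (tendsto_natCast_atTop_atTop (R := ℝ)).eventually (eventually_ge_atTop t)
  filter_upwards [h1, h2] with n h1 h2
  exact ⟨h1, by linarith⟩

lemma tendsto_vert (g : ℝ → ℂ) (hg : IntegrableOn g (Set.Ioi 0)) :
    Tendsto (fun n : ℕ => ∫ τ in (1 / ((n:ℝ) + 1))..((n:ℝ) + 1), g τ) atTop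
      (𝓝 (∫ τ in Set.Ioi 0, g τ)) := by
  have := cover_pos.integral_tendsto_of_countably_generated hg
  refine this.congr fun n => ?_
  have hn : (0:ℝ) < (n:ℝ) + 1 := by positivity
  have hle : 1 / ((n:ℝ) + 1) ≤ (n:ℝ) + 1 := by
    rw [div_le_iff₀ hn]; nlinarith [(Nat.cast_nonneg n : (0:ℝ) ≤ n)]
  rw [intervalIntegral.integral_of_le hle, Measure.restrict_restrict measurableSet_Ioc]
  congr 2
  apply Set.inter_eq_left.2
  intro t ht
  exact lt_trans (by positivity) ht.1

lemma norm_exp_fc (x t r : ℝ) :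
    ‖Complex.exp (-Complex.I * x * (t - r * Complex.I))‖ = Real.exp (-(x * r)) := by
  rw [Complex.norm_exp]
  congr 1
  simp

lemma tendsto_far {x : ℝ} (hx : 1 ≤ x) {u : ℂ} (h : Good u) :
    Tendsto (fun n : ℕ => ∫ t in (0:ℝ)..1, fc x u (t - ((n:ℝ) + 1 : ℝ) * Complex.I)) atTop (𝓝 0) := by
  have hlo := h.lo
  have hhi := h.hi
  have key : ∀ n : ℕ, ‖∫ t in (0:ℝ)..1, fc x u (t - ((n:ℝ) + 1 : ℝ) * Complex.I)‖ ≤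
      (Real.exp (-((n:ℝ) + 1)) * (2 * ((n:ℝ) + 1)) * Real.exp π ^ 2) * |1 - 0| := by
    intro n
    apply intervalIntegral.norm_integral_le_of_norm_le_const
    intro t ht
    rw [Set.uIoc_of_le zero_le_one] at ht
    set r : ℝ := (n:ℝ) + 1 with hr
    have hr1 : 1 ≤ r := by rw [hr]; linarith [(Nat.cast_nonneg n : (0:ℝ) ≤ n)]
    unfold fc
    rw [norm_mul, norm_mul, norm_exp_fc]
    have n1 : 1 ≤ ‖(t:ℂ) - r * Complex.I‖ := by
      have := Complex.abs_im_le_norm ((t:ℂ) - r * Complex.I)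
      simp at this
      linarith [le_abs_self r]
    have n2 : 1 ≤ ‖1 - ((t:ℂ) - r * Complex.I)‖ := by
      have := Complex.abs_im_le_norm (1 - ((t:ℂ) - r * Complex.I))
      simp at this
      linarith [le_abs_self r]
    have n3 : ‖1 - ((t:ℂ) - r * Complex.I)‖ ≤ 2 * r := by
      have : (1 - ((t:ℂ) - r * Complex.I)) = ((1 - t : ℝ) : ℂ) + r * Complex.I := by push_cast; ring
      rw [this]
      refine (norm_add_le _ _).trans ?_
      rw [norm_mul, Complex.norm_I, Complex.norm_real, Complex.norm_real, Real.norm_eq_abs,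
        Real.norm_eq_abs, abs_of_nonneg (by linarith [ht.2]), abs_of_nonneg (by linarith)]
      linarith [ht.1]
    have e1 : ‖((t:ℂ) - r * Complex.I) ^ (u - 1)‖ ≤ 1 * Real.exp π := by
      refine (ncpow _ _ h.im1).trans ?_
      rw [re1]
      gcongr
      exact Real.rpow_le_one_of_one_le_of_nonpos n1 (by linarith)
    have e2 : ‖(1 - ((t:ℂ) - r * Complex.I)) ^ (3 / 2 - u - 1)‖ ≤ (2 * r) * Real.exp π := by
      refine (ncpow _ _ h.im2).trans ?_
      rw [re2]
      gcongr
      refine le_trans ?_ n3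
      have := Real.rpow_le_rpow_of_exponent_le n2 (show 1 / 2 - u.re ≤ 1 by linarith)
      rwa [Real.rpow_one] at this
    calc _ ≤ Real.exp (-r) * (1 * Real.exp π * ((2 * r) * Real.exp π)) := by
          gcongr
          nlinarith
      _ = _ := by ring
  refine squeeze_zero_norm key ?_
  have h1 : Tendsto (fun y : ℝ => y ^ 1 * Real.exp (-y)) atTop (𝓝 0) :=
    Real.tendsto_pow_mul_exp_neg_atTop_nhds_zero 1
  have h2 : Tendsto (fun n : ℕ => (n:ℝ) + 1) atTop atTop :=
    tendsto_atTop_add_const_right _ _ tendsto_natCast_atTop_atTop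
  have := (h1.comp h2).const_mul (2 * Real.exp π ^ 2)
  rw [mul_zero] at this
  refine this.congr fun n => ?_
  simp
  ring

lemma tendsto_near {x : ℝ} (hx : 1 ≤ x) {u : ℂ} (h : Good u) :
    Tendsto (fun n : ℕ => ∫ t in (0:ℝ)..1, fc x u (t - (1 / ((n:ℝ) + 1) : ℝ) * Complex.I)) atTop
      (𝓝 (∫ t in (0:ℝ)..1, fc x u t)) := by
  have hlo := h.lo
  have hhi := h.hi
  refine intervalIntegral.tendsto_integral_filter_of_dominated_convergence
    (fun t : ℝ => 2 * Real.exp π ^ 2 *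
      ‖(t:ℂ) ^ ((u.re : ℂ) - 1) * (1 - (t:ℂ)) ^ ((7 / 8 : ℂ) - 1)‖) ?_ ?_ ?_ ?_
  · refine Eventually.of_forall fun n => Measurable.aestronglyMeasurable ?_
    unfold fc
    fun_prop
  · refine Eventually.of_forall fun n => ?_
    filter_upwards [compl_mem_ae_iff.2 (measure_singleton (1:ℝ))] with t ht1 ht
    rw [Set.uIoc_of_le zero_le_one] at ht
    have ht1 : t ≠ 1 := ht1
    have ht2 : t < 1 := lt_of_le_of_ne ht.2 ht1
    set r : ℝ := 1 / ((n:ℝ) + 1) with hr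
    have hr0 : 0 ≤ r := by positivity
    have hr1 : r ≤ 1 := by
      rw [hr, div_le_one (by positivity)]; linarith [(Nat.cast_nonneg n : (0:ℝ) ≤ n)]
    have ha : ‖(t:ℂ) ^ ((u.re : ℂ) - 1)‖ = t ^ (u.re - 1) := by
      rw [Complex.norm_cpow_eq_rpow_re_of_pos ht.1]; simp
    have hb : ‖(1 - (t:ℂ)) ^ ((7 / 8 : ℂ) - 1)‖ = (1 - t) ^ (-(1 / 8) : ℝ) := by
      rw [show (1 - (t:ℂ)) = ((1 - t : ℝ) : ℂ) by push_cast; ring,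
        Complex.norm_cpow_eq_rpow_re_of_pos (by linarith)]
      norm_num
    rw [norm_mul, ha, hb]
    unfold fc
    rw [norm_mul, norm_mul, norm_exp_fc]
    have n1 : t ≤ ‖(t:ℂ) - r * Complex.I‖ := by
      have := Complex.abs_re_le_norm ((t:ℂ) - r * Complex.I)
      simp at this
      linarith [le_abs_self t]
    have n2 : 1 - t ≤ ‖1 - ((t:ℂ) - r * Complex.I)‖ := by
      have := Complex.abs_re_le_norm (1 - ((t:ℂ) - r * Complex.I))
      simp at this
      linarith [le_abs_self (1 - t)]
    have n3 : ‖1 - ((t:ℂ) - r * Complex.I)‖ ≤ 2 := by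
      have : (1 - ((t:ℂ) - r * Complex.I)) = ((1 - t : ℝ) : ℂ) + r * Complex.I := by push_cast; ring
      rw [this]
      refine (norm_add_le _ _).trans ?_
      rw [norm_mul, Complex.norm_I, Complex.norm_real, Complex.norm_real, Real.norm_eq_abs,
        Real.norm_eq_abs, abs_of_nonneg (by linarith [ht.2]), abs_of_nonneg (by linarith)]
      linarith [ht.1]
    have e1 : ‖((t:ℂ) - r * Complex.I) ^ (u - 1)‖ ≤ t ^ (u.re - 1) * Real.exp π := by
      refine (ncpow _ _ h.im1).trans ?_
      rw [re1]
      gcongr ?_ * _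
      exact Real.rpow_le_rpow_of_nonpos ht.1 n1 (by linarith)
    have hone : 1 ≤ (1 - t) ^ (-(1 / 8) : ℝ) :=
      Real.one_le_rpow_of_pos_of_le_one_of_nonpos (by linarith) (by linarith [ht.1]) (by norm_num)
    have e2 : ‖(1 - ((t:ℂ) - r * Complex.I)) ^ (3 / 2 - u - 1)‖ ≤
        (2 * (1 - t) ^ (-(1 / 8) : ℝ)) * Real.exp π := by
      refine (ncpow _ _ h.im2).trans ?_
      rw [re2]
      gcongr ?_ * _
      rcases le_total ‖1 - ((t:ℂ) - r * Complex.I)‖ 1 with hc | hc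
      · have q1 := Real.rpow_le_rpow_of_exponent_ge (by linarith) hc
          (show -(1 / 8) ≤ 1 / 2 - u.re by linarith)
        have q2 := Real.rpow_le_rpow_of_nonpos (by linarith) n2 (show (-(1 / 8) : ℝ) ≤ 0 by norm_num)
        exact (q1.trans q2).trans (by linarith)
      · have := Real.rpow_le_rpow_of_exponent_le hc (show 1 / 2 - u.re ≤ 1 by linarith)
        rw [Real.rpow_one] at this
        linarith
    have e0 : Real.exp (-(x * r)) ≤ 1 := by
      rw [Real.exp_le_one_iff]
      have : 0 ≤ x * r := mul_nonneg (by linarith) hr0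
      linarith
    have ht0 : 0 ≤ t ^ (u.re - 1) := Real.rpow_nonneg ht.1.le _
    calc _ ≤ 1 * (t ^ (u.re - 1) * Real.exp π * ((2 * (1 - t) ^ (-(1 / 8) : ℝ)) * Real.exp π)) := by
          gcongr
      _ = _ := by ring
  · refine IntervalIntegrable.const_mul (IntervalIntegrable.norm ?_) _
    apply Complex.betaIntegral_convergent
    · simp; linarith
    · norm_num
  · filter_upwards [compl_mem_ae_iff.2 (measure_singleton (1:ℝ))] with t ht1 ht
    rw [Set.uIoc_of_le zero_le_one] at ht
    have ht1 : t ≠ 1 := ht1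
    have ht2 : t < 1 := lt_of_le_of_ne ht.2 ht1
    have hc : ContinuousAt (fc x u) t :=
      (fc_diff x u (Or.inl (by simpa using ht.1)) (Or.inl (by simpa using ht2))).continuousAt
    have h0 : Tendsto (fun n : ℕ => (t:ℂ) - (1 / ((n:ℝ) + 1) : ℝ) * Complex.I) atTop (𝓝 (t:ℂ)) := by
      have := ((Complex.continuous_ofReal.tendsto 0).comp
        (tendsto_one_div_add_atTop_nhds_zero_nat (𝕜 := ℝ))).mul_const Complex.I
      simpa using this.const_sub (t:ℂ)
    exact hc.tendsto.comp h0

lemma contour {x : ℝ} (hx : 1 ≤ x) {u : ℂ} (h : Good u) :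
    (∫ t in (0:ℝ)..1, fc x u t) = Complex.I * (∫ τ in Set.Ioi 0, fc x u (1 - (τ:ℝ) * Complex.I))
      - Complex.I * (∫ τ in Set.Ioi 0, fc x u (-(τ:ℝ) * Complex.I)) := by
  have hx0 : 0 < x := by linarith
  have iA : IntegrableOn (fun τ : ℝ => fc x u (-(τ:ℝ) * Complex.I)) (Set.Ioi 0) := by
    have : IntegrableOn (fun τ : ℝ => hA x u (x * τ)) (Set.Ioi 0) := by
      rw [integrableOn_Ioi_comp_mul_left_iff _ _ hx0, mul_zero]; exact hA_int hx h
    refine IntegrableOn.congr_fun (this.const_mul ((-Complex.I) ^ (u - 1) * (x : ℂ) ^ (1 - u)))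
      (fun τ hτ => ?_) measurableSet_Ioi
    exact (fc_A hx0 hτ u).symm
  have iB : IntegrableOn (fun τ : ℝ => fc x u (1 - (τ:ℝ) * Complex.I)) (Set.Ioi 0) := by
    have : IntegrableOn (fun τ : ℝ => hB x u (x * τ)) (Set.Ioi 0) := by
      rw [integrableOn_Ioi_comp_mul_left_iff _ _ hx0, mul_zero]; exact hB_int x h
    refine IntegrableOn.congr_fun (this.const_mul (Complex.exp (-Complex.I * x) *
      Complex.I ^ (3 / 2 - u - 1) * (x : ℂ) ^ (-(3 / 2 - u - 1))))
      (fun τ hτ => ?_) measurableSet_Ioi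
    exact (fc_B hx0 hτ u).symm
  have L := ((tendsto_far hx h).add ((tendsto_vert _ iB).const_mul Complex.I)).sub
    ((tendsto_vert _ iA).const_mul Complex.I)
  rw [zero_add] at L
  refine tendsto_nhds_unique (tendsto_near hx h) (L.congr fun n => ?_)
  exact (fc_rect x u (by positivity) (by positivity)).symm

/-- the exact formula for the normalised integral -/
lemma main_formula {x : ℝ} (hx : 1 ≤ x) {u : ℂ} (h : Good u) :
    (x:ℂ) ^ u * (∫ t in (0:ℝ)..1, fc x u t) = (-Complex.I) ^ u * (∫ σ in Set.Ioi 0, hA x u σ)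
      + Complex.I * Complex.exp (-Complex.I * x) * Complex.I ^ (3 / 2 - u - 1)
        * (x:ℂ) ^ (2 * u - 3 / 2) * (∫ σ in Set.Ioi 0, hB x u σ) := by
  have hx0 : 0 < x := by linarith
  have hx' : (x : ℂ) ≠ 0 := by exact_mod_cast hx0.ne'
  have eA : ∫ τ in Set.Ioi 0, fc x u (-(τ:ℝ) * Complex.I) =
      (-Complex.I) ^ (u - 1) * (x : ℂ) ^ (1 - u) * ((x:ℂ)⁻¹ * ∫ σ in Set.Ioi 0, hA x u σ) := by
    rw [setIntegral_congr_fun measurableSet_Ioi (fun τ hτ => fc_A hx0 hτ u),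
      MeasureTheory.integral_const_mul, integral_comp_mul_left_Ioi _ _ hx0, mul_zero,
      Complex.real_smul, Complex.ofReal_inv]
  have eB : ∫ τ in Set.Ioi 0, fc x u (1 - (τ:ℝ) * Complex.I) =
      Complex.exp (-Complex.I * x) * Complex.I ^ (3 / 2 - u - 1) * (x : ℂ) ^ (-(3 / 2 - u - 1))
       * ((x:ℂ)⁻¹ * ∫ σ in Set.Ioi 0, hB x u σ) := by
    rw [setIntegral_congr_fun measurableSet_Ioi (fun τ hτ => fc_B hx0 hτ u),
      MeasureTheory.integral_const_mul, integral_comp_mul_left_Ioi _ _ hx0, mul_zero,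
      Complex.real_smul, Complex.ofReal_inv]
  rw [contour hx h, eA, eB]
  have p1 : (x:ℂ) ^ u * (x : ℂ) ^ (1 - u) * (x:ℂ)⁻¹ = 1 := by
    rw [← Complex.cpow_add _ _ hx']; simp [hx']
  have p2 : (x:ℂ) ^ (2 * u - 3 / 2) = (x:ℂ) ^ u * (x : ℂ) ^ (-(3 / 2 - u - 1)) * (x:ℂ)⁻¹ := by
    rw [← Complex.cpow_neg_one, ← Complex.cpow_add _ _ hx', ← Complex.cpow_add _ _ hx']
    congr 1; ring
  have p3 : (-Complex.I) ^ u = (-Complex.I) ^ (u - 1) * (-Complex.I) := by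
    rw [Complex.cpow_sub _ _ (by simp), Complex.cpow_one]; field_simp
  rw [p2, p3]
  linear_combination (-Complex.I * (-Complex.I) ^ (u - 1) * ∫ σ in Set.Ioi 0, hA x u σ) * p1

lemma norm_xcpow {x : ℝ} (hx : 1 ≤ x) {u : ℂ} (h : Good u) :
    ‖(x:ℂ) ^ (2 * u - 3 / 2)‖ ≤ x ^ (-(1 / 4) : ℝ) := by
  have hhi := h.hi
  rw [Complex.norm_cpow_eq_rpow_re_of_pos (by linarith)]
  apply Real.rpow_le_rpow_of_exponent_le hx
  simp
  linarith

lemma norm_pref (x : ℝ) {u : ℂ} (h : Good u) :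
    ‖Complex.I * Complex.exp (-Complex.I * x) * Complex.I ^ (3 / 2 - u - 1)‖ ≤ Real.exp π := by
  have e1 : ‖Complex.exp (-Complex.I * x)‖ = 1 := by
    rw [Complex.norm_exp]; simp
  rw [norm_mul, norm_mul, e1, Complex.norm_I, one_mul, one_mul]
  have := ncpow Complex.I (3 / 2 - u - 1) h.im2
  simpa using this

noncomputable def Gx (x : ℝ) (u : ℂ) : ℂ := (x:ℂ) ^ u * ∫ t in (0:ℝ)..1, fc x u t

lemma CD_nonneg : 0 ≤ CD := by
  unfold CD
  have := dom_nonneg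
  positivity

lemma Gx_bound {x : ℝ} (hx : 1 ≤ x) {u : ℂ} (h : Good u) : ‖Gx x u‖ ≤ 2 * Real.exp π * CD := by
  unfold Gx
  rw [main_formula hx h]
  refine (norm_add_le _ _).trans ?_
  have h1 : ‖(-Complex.I) ^ u‖ ≤ Real.exp π := by
    simpa using ncpow (-Complex.I) u h.im
  have h2 := IA_bound hx h
  have h3 := IB_bound x h
  have h4 : ‖(x:ℂ) ^ (2 * u - 3 / 2)‖ ≤ 1 := (norm_xcpow hx h).trans
    (Real.rpow_le_one_of_one_le_of_nonpos hx (by norm_num))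
  have h5 := norm_pref x h
  have hc := CD_nonneg
  rw [norm_mul, norm_mul, norm_mul (_ * _) ((x:ℂ) ^ (2 * u - 3 / 2))]
  calc _ ≤ Real.exp π * CD + Real.exp π * 1 * CD := by gcongr
    _ = _ := by ring

lemma Gx_tendsto {u : ℂ} (h : Good u) :
    Tendsto (fun x => Gx x u) atTop (𝓝 ((-Complex.I) ^ u * Complex.Gamma u)) := by
  have h1 := (IA_tendsto h).const_mul ((-Complex.I) ^ u)
  have h2 : Tendsto (fun x : ℝ => Complex.I * Complex.exp (-Complex.I * x) *
      Complex.I ^ (3 / 2 - u - 1) * (x:ℂ) ^ (2 * u - 3 / 2) * (∫ σ in Set.Ioi 0, hB x u σ))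
      atTop (𝓝 0) := by
    have hz : Tendsto (fun x : ℝ => Real.exp π * x ^ (-(1 / 4) : ℝ) * CD) atTop (𝓝 0) := by
      have := ((tendsto_rpow_neg_atTop (show (0:ℝ) < 1 / 4 by norm_num)).const_mul
        (Real.exp π)).mul_const CD
      simpa using this
    refine squeeze_zero_norm' ?_ hz
    filter_upwards [eventually_ge_atTop 1] with x hx
    have hc := CD_nonneg
    rw [norm_mul, norm_mul (_ * _) ((x:ℂ) ^ (2 * u - 3 / 2))]
    have h3 := IB_bound x h
    have h4 := norm_xcpow hx h
    have h5 := norm_pref x h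
    gcongr
  have := h1.add h2
  rw [add_zero] at this
  refine this.congr' ?_
  filter_upwards [eventually_ge_atTop 1] with x hx
  exact (main_formula hx h).symm



lemma beta_formula {u : ℂ} (h : Good u) :
    Complex.Gamma u * Complex.Gamma (3 / 2 - u) = Complex.Gamma (3 / 2) * Complex.betaIntegral u (3 / 2 - u) := by
  have := Complex.Gamma_mul_Gamma_eq_betaIntegral (s := u) (t := 3 / 2 - u)
    (by linarith [h.lo]) (by simp; linarith [h.hi])
  rw [this]; congr 2; ring

lemma beta_ne {u : ℂ} (h : Good u) : Complex.betaIntegral u (3 / 2 - u) ≠ 0 := by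
  have h1 := beta_formula h
  have h2 : Complex.Gamma u ≠ 0 := Complex.Gamma_ne_zero_of_re_pos (by linarith [h.lo])
  have h3 : Complex.Gamma (3 / 2 - u) ≠ 0 :=
    Complex.Gamma_ne_zero_of_re_pos (by simp; linarith [h.hi])
  intro h0
  rw [h0, mul_zero] at h1
  exact mul_ne_zero h2 h3 h1

lemma good_sub {w : ℂ} (hw : ‖w‖ ≤ 1 / 8) : Good (1 / 2 - w) := by
  have h1 := abs_le.1 ((Complex.abs_re_le_norm w).trans hw)
  have h2 := ((Complex.abs_im_le_norm w).trans hw)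
  constructor <;> simp <;> linarith

lemma good_add {w : ℂ} (hw : ‖w‖ ≤ 1 / 8) : Good (1 / 2 + w) := by
  have h1 := abs_le.1 ((Complex.abs_re_le_norm w).trans hw)
  have h2 := ((Complex.abs_im_le_norm w).trans hw)
  constructor <;> simp <;> linarith

lemma af_zero {u : ℂ} (h : Good u) (κ : ℂ) : af κ u 0 = 1 := by
  unfold af
  rw [beta_eq]
  simp [beta_ne h]

lemma sys_w {w : ℂ} (hw : ‖w‖ ≤ 1 / 8) :
    Sys (-4 * Complex.I * w) (af Complex.I (1 / 2 - w)) (bf Complex.I (1 / 2 - w))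
      (af (-Complex.I) (1 / 2 + w)) (bf (-Complex.I) (1 / 2 + w)) := by
  have g1 := good_sub hw
  have g2 := good_add hw
  refine ⟨fun s => ?_, fun s => ?_, fun s => ?_, fun s => ?_⟩
  · refine (af_deriv (by linarith [g1.lo]) (by linarith [g1.hi]) _ s).congr_deriv ?_
    ring
  · exact bf_deriv (by linarith [g1.lo]) (by linarith [g1.hi]) _ s
  · refine (af_deriv (by linarith [g2.lo]) (by linarith [g2.hi]) _ s).congr_deriv ?_
    ring
  · refine (bf_deriv (by linarith [g2.lo]) (by linarith [g2.hi]) _ s).congr_deriv ?_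
    rw [neg_neg]

/-- the transition amplitude product -/
noncomputable def PP (w : ℂ) (T : ℝ) : ℂ :=
  2 * (-4 * Complex.I * w) * (bf Complex.I (1 / 2 - w) T * bf (-Complex.I) (1 / 2 + w) T)

lemma hasSum_w {w : ℂ} (hw : ‖w‖ ≤ 1 / 8) {T : ℝ} (hT : 0 ≤ T) :
    HasSum (fun n => (-(4 * (-4 * Complex.I * w))) ^ n * (volt T)^[n] (fun _ => 1) T)
      (2 * (1 - PP w T) ^ 2 - 1) := by
  have eva : ∀ κ u : ℂ, ∀ s : ℝ, af κ u (-s) = af κ u s := by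
    intro κ u s; unfold af; simp [mom_even]
  have odb : ∀ κ u : ℂ, ∀ s : ℝ, bf κ u (-s) = - bf κ u s := by
    intro κ u s; unfold bf; simp [mom_even]; ring
  obtain ⟨z, hz, h1, h2⟩ := (sys_w hw).exists_z T (af_zero (good_sub hw) _) (by simp [bf])
    (af_zero (good_add hw) _) (eva _ _) (odb _ _) (eva _ _) (odb _ _)
  have := volt_hasSum T hT z hz _ h1
  rw [h2] at this
  exact this

lemma mom_fc (u : ℂ) (T : ℝ) : Mom Complex.I u 0 T = ∫ t in (0:ℝ)..1, fc (T ^ 2) u t := by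
  unfold Mom fc wt
  simp

lemma mom_conj (u : ℂ) (T : ℝ) :
    Mom (-Complex.I) u 0 T = (starRingEnd ℂ) (Mom Complex.I ((starRingEnd ℂ) u) 0 T) := by
  unfold Mom
  rw [← intervalIntegral_conj]
  refine intervalIntegral.integral_congr fun t ht => ?_
  rw [Set.uIcc_of_le zero_le_one] at ht
  unfold wt
  have h1 : (starRingEnd ℂ) ((t:ℂ) ^ ((starRingEnd ℂ) u - 1)) = (t:ℂ) ^ (u - 1) := by
    have := Complex.conj_cpow (t:ℂ) (u - 1) (by rw [Complex.arg_ofReal_of_nonneg ht.1]; exact pi_pos.ne)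
    simpa using this.symm
  have h2 : (starRingEnd ℂ) ((1 - (t:ℂ)) ^ (3 / 2 - (starRingEnd ℂ) u - 1)) =
      (1 - (t:ℂ)) ^ (3 / 2 - u - 1) := by
    have := Complex.conj_cpow (((1 - t : ℝ)):ℂ) (3 / 2 - u - 1)
      (by rw [Complex.arg_ofReal_of_nonneg (by linarith [ht.2])]; exact pi_pos.ne)
    have e : (starRingEnd ℂ) (3 / 2 - u - 1) = 3 / 2 - (starRingEnd ℂ) u - 1 := by
      simp [map_ofNat]
    rw [e, Complex.conj_ofReal] at this
    simpa using this.symm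
  simp only [map_mul, h1, h2, ← Complex.exp_conj]
  simp

lemma gamma_cos {w : ℂ} (hw : ‖w‖ ≤ 1 / 8) :
    Complex.Gamma (1 / 2 - w) * Complex.Gamma (1 / 2 + w) * Complex.cos (π * w) = π ∧
      Complex.cos (π * w) ≠ 0 := by
  have g1 := good_sub hw
  have g2 := good_add hw
  have n1 : Complex.Gamma (1 / 2 - w) ≠ 0 := Complex.Gamma_ne_zero_of_re_pos (by linarith [g1.lo])
  have n2 : Complex.Gamma (1 / 2 + w) ≠ 0 := Complex.Gamma_ne_zero_of_re_pos (by linarith [g2.lo])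
  have h := Complex.Gamma_mul_Gamma_one_sub (1 / 2 + w)
  have e1 : (1 : ℂ) - (1 / 2 + w) = 1 / 2 - w := by ring
  have e2 : Complex.sin (π * (1 / 2 + w)) = Complex.cos (π * w) := by
    rw [← Complex.sin_add_pi_div_two]; congr 1; ring
  rw [e1, e2] at h
  have hc : Complex.cos (π * w) ≠ 0 := by
    intro h0
    rw [h0, div_zero] at h
    exact mul_ne_zero n2 n1 h
  refine ⟨?_, hc⟩
  rw [mul_comm (Complex.Gamma _), h]
  field_simp

lemma gamma_sin {w : ℂ} (hw : ‖w‖ ≤ 1 / 8) (w0 : w ≠ 0) :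
    Complex.Gamma (1 + w) * Complex.Gamma (1 - w) * Complex.sin (π * w) = π * w ∧
      Complex.sin (π * w) ≠ 0 := by
  have h1 := abs_le.1 ((Complex.abs_re_le_norm w).trans hw)
  have n1 : Complex.Gamma (1 + w) ≠ 0 := Complex.Gamma_ne_zero_of_re_pos (by simp; linarith)
  have n2 : Complex.Gamma (1 - w) ≠ 0 := Complex.Gamma_ne_zero_of_re_pos (by simp; linarith)
  have h := Complex.Gamma_mul_Gamma_one_sub w
  have h3 := Complex.Gamma_add_one w w0
  rw [add_comm w 1] at h3
  have n3 : Complex.Gamma w ≠ 0 := by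
    intro h0; rw [h0, mul_zero] at h3; exact n1 h3
  have hs : Complex.sin (π * w) ≠ 0 := by
    intro h0
    rw [h0, div_zero] at h
    exact mul_ne_zero n3 n2 h
  refine ⟨?_, hs⟩
  rw [h3, mul_assoc w, h, mul_assoc, div_mul_cancel₀ _ hs, mul_comm]

lemma gamma_three_half : Complex.Gamma (3 / 2) ^ 2 = π / 4 := by
  have h := Complex.Gamma_mul_Gamma_one_sub (1 / 2)
  have e : Complex.sin (π * (1 / 2)) = 1 := by
    rw [show (π:ℂ) * (1 / 2) = π / 2 by ring, Complex.sin_pi_div_two]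
  rw [e, show (1:ℂ) - 1 / 2 = 1 / 2 by ring, div_one] at h
  have h3 := Complex.Gamma_add_one (1 / 2) (by norm_num)
  rw [show (1:ℂ) / 2 + 1 = 3 / 2 by ring] at h3
  rw [h3]
  linear_combination (1 / 4 : ℂ) * h

lemma beta_prod {w : ℂ} (hw : ‖w‖ ≤ 1 / 8) (w0 : w ≠ 0) :
    Complex.betaIntegral (1 / 2 - w) (3 / 2 - (1 / 2 - w)) *
      Complex.betaIntegral (1 / 2 + w) (3 / 2 - (1 / 2 + w)) * Complex.sin (2 * (π * w)) = 8 * π * w := by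
  have h1 := beta_formula (good_sub hw)
  have h2 := beta_formula (good_add hw)
  obtain ⟨h3, h3'⟩ := gamma_cos hw
  obtain ⟨h4, h4'⟩ := gamma_sin hw w0
  have h5 := gamma_three_half
  set B1 := Complex.betaIntegral (1 / 2 - w) (3 / 2 - (1 / 2 - w))
  set B2 := Complex.betaIntegral (1 / 2 + w) (3 / 2 - (1 / 2 + w))
  rw [show (3:ℂ) / 2 - (1 / 2 - w) = 1 + w by ring] at h1
  rw [show (3:ℂ) / 2 - (1 / 2 + w) = 1 - w by ring] at h2
  rw [Complex.sin_two_mul]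
  have hp : (π:ℂ) ≠ 0 := by exact_mod_cast pi_ne_zero
  have key : (π:ℂ) / 4 * (B1 * B2) * (Complex.sin (π * w) * Complex.cos (π * w)) = π * (π * w) := by
    rw [← h5]
    calc _ = (Complex.Gamma (3 / 2) * B1) * (Complex.Gamma (3 / 2) * B2) *
        (Complex.sin (π * w) * Complex.cos (π * w)) := by ring
      _ = (Complex.Gamma (1 / 2 - w) * Complex.Gamma (1 / 2 + w) * Complex.cos (π * w)) *
        (Complex.Gamma (1 + w) * Complex.Gamma (1 - w) * Complex.sin (π * w)) := by
          rw [← h1, ← h2]; ring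
      _ = _ := by rw [h3, h4]
  apply mul_left_cancel₀ hp
  linear_combination 8 * key

lemma PP_eq {w : ℂ} (hw : ‖w‖ ≤ 1 / 8) (w0 : w ≠ 0) {T : ℝ} (hT : 1 ≤ T) :
    PP w T = -(Complex.I / π) * Complex.sin (2 * (π * w)) *
      (Gx (T ^ 2) (1 / 2 - w) * (starRingEnd ℂ) (Gx (T ^ 2) (1 / 2 + (starRingEnd ℂ) w))) := by
  have hb := beta_prod hw w0
  have n1 := beta_ne (good_sub hw)
  have n2 := beta_ne (good_add hw)
  have hp : (π:ℂ) ≠ 0 := by exact_mod_cast pi_ne_zero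
  have hTT : (0:ℝ) < T ^ 2 := by positivity
  have e1 : (starRingEnd ℂ) (1 / 2 + w) = 1 / 2 + (starRingEnd ℂ) w := by simp [map_ofNat]
  have e2 : (starRingEnd ℂ) (((T ^ 2 : ℝ):ℂ) ^ (1 / 2 + (starRingEnd ℂ) w)) = ((T ^ 2 : ℝ):ℂ) ^ (1 / 2 + w) := by
    have := Complex.conj_cpow ((T ^ 2 : ℝ):ℂ) (1 / 2 + w)
      (by rw [Complex.arg_ofReal_of_nonneg hTT.le]; exact pi_pos.ne)
    rw [e1, Complex.conj_ofReal] at this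
    exact this.symm
  have e3 : ((T ^ 2 : ℝ):ℂ) ^ (1 / 2 - w) * ((T ^ 2 : ℝ):ℂ) ^ (1 / 2 + w) = (T:ℂ) ^ 2 := by
    rw [← Complex.cpow_add _ _ (by exact_mod_cast hTT.ne')]
    rw [show (1:ℂ) / 2 - w + (1 / 2 + w) = 1 by ring, Complex.cpow_one]; push_cast; rfl
  unfold Gx
  rw [map_mul, e2, ← mom_fc, ← mom_fc, ← e1, ← mom_conj]
  unfold PP bf
  set B1 := Complex.betaIntegral (1 / 2 - w) (3 / 2 - (1 / 2 - w))
  set B2 := Complex.betaIntegral (1 / 2 + w) (3 / 2 - (1 / 2 + w))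
  set M1 := Mom Complex.I (1 / 2 - w) 0 T
  set M2 := Mom (-Complex.I) (1 / 2 + w) 0 T
  have e4 : ((T ^ 2 : ℝ):ℂ) ^ (1 / 2 - w) * M1 * (((T ^ 2 : ℝ):ℂ) ^ (1 / 2 + w) * M2) = (T:ℂ) ^ 2 * (M1 * M2) := by
    rw [← e3]; ring
  rw [e4]
  generalize Complex.sin (2 * (π * w)) = S at *
  field_simp
  linear_combination (T ^ 2 * M1 * M2) * hb

lemma PP_tendsto {w : ℂ} (hw : ‖w‖ ≤ 1 / 8) (w0 : w ≠ 0) :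
    Tendsto (PP w) atTop (𝓝 (1 - Complex.exp (2 * (π * w) * Complex.I))) := by
  have hwc : ‖(starRingEnd ℂ) w‖ ≤ 1 / 8 := by rwa [RCLike.norm_conj]
  have hsq : Tendsto (fun T : ℝ => T ^ 2) atTop atTop := tendsto_pow_atTop (by norm_num)
  have t1 := (Gx_tendsto (good_sub hw)).comp hsq
  have t2 := (Complex.continuous_conj.tendsto _).comp ((Gx_tendsto (good_add hwc)).comp hsq)
  have t3 := (t1.mul t2).const_mul (-(Complex.I / π) * Complex.sin (2 * (π * w)))
  have hp : (π:ℂ) ≠ 0 := by exact_mod_cast pi_ne_zero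
  have ec : (1:ℂ) / 2 + (starRingEnd ℂ) w = (starRingEnd ℂ) (1 / 2 + w) := by simp [map_ofNat]
  have hv : -(Complex.I / π) * Complex.sin (2 * (π * w)) * ((-Complex.I) ^ (1 / 2 - w) * Complex.Gamma (1 / 2 - w) *
      (starRingEnd ℂ) ((-Complex.I) ^ (1 / 2 + (starRingEnd ℂ) w) * Complex.Gamma (1 / 2 + (starRingEnd ℂ) w)))
      = 1 - Complex.exp (2 * (π * w) * Complex.I) := by
    obtain ⟨h3, h3'⟩ := gamma_cos hw
    have c1 : (starRingEnd ℂ) ((-Complex.I) ^ (1 / 2 + (starRingEnd ℂ) w)) = Complex.I ^ (1 / 2 + w) := by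
      have := Complex.conj_cpow (-Complex.I) (1 / 2 + w)
        (by rw [Complex.arg_neg_I]; linarith [pi_pos])
      rw [ec, ← this]; simp
    have c2 : (-Complex.I) ^ (1 / 2 - w) * Complex.I ^ (1 / 2 + w) = Complex.exp (π * w * Complex.I) := by
      rw [Complex.cpow_def_of_ne_zero (by simp), Complex.cpow_def_of_ne_zero (by simp),
        Complex.log_I, Complex.log_neg_I, ← Complex.exp_add]
      congr 1; ring
    rw [map_mul, c1, ec, Complex.Gamma_conj, Complex.conj_conj]
    have c3 : (-Complex.I) ^ (1 / 2 - w) * Complex.Gamma (1 / 2 - w) * (Complex.I ^ (1 / 2 + w) * Complex.Gamma (1 / 2 + w))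
       = Complex.exp (π * w * Complex.I) * (Complex.Gamma (1 / 2 - w) * Complex.Gamma (1 / 2 + w)) := by
      rw [← c2]; ring
    rw [c3, Complex.sin_two_mul]
    have c4 : -(Complex.I / π) * (2 * Complex.sin (π * w) * Complex.cos (π * w)) *
      (Complex.exp (π * w * Complex.I) * (Complex.Gamma (1 / 2 - w) * Complex.Gamma (1 / 2 + w)))
       = -(Complex.I / π) * (2 * Complex.sin (π * w)) * Complex.exp (π * w * Complex.I) * π := by
      linear_combination (-(Complex.I / π) * (2 * Complex.sin (π * w)) * Complex.exp (π * w * Complex.I)) * h3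
    rw [c4]
    have c5 : Complex.exp (2 * (π * w) * Complex.I) = Complex.exp (π * w * Complex.I) ^ 2 := by
      rw [← Complex.exp_nat_mul]; congr 1; push_cast; ring
    have c6 : Complex.exp (-(π * w) * Complex.I) * Complex.exp (π * w * Complex.I) = 1 := by
      rw [← Complex.exp_add]; simp
    rw [c5, Complex.sin]
    generalize Complex.exp (-(π * w) * Complex.I) = X at *
    generalize Complex.exp (π * w * Complex.I) = Y at *
    field_simp
    linear_combination c6 - (X * Y - Y ^ 2) * Complex.I_sq
  rw [hv] at t3
  refine t3.congr' ?_
  filter_upwards [eventually_ge_atTop 1] with T hT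
  rw [PP_eq hw w0 hT]; rfl

lemma csin_norm_le (z : ℂ) : ‖Complex.sin z‖ ≤ Real.exp ‖z‖ := by
  unfold Complex.sin
  have h1 := Complex.norm_exp_le_exp_norm (-z * Complex.I)
  have h2 := Complex.norm_exp_le_exp_norm (z * Complex.I)
  have h3 := norm_sub_le (Complex.exp (-z * Complex.I)) (Complex.exp (z * Complex.I))
  simp only [norm_mul, norm_neg, Complex.norm_I, mul_one, norm_div, RCLike.norm_ofNat] at *
  linarith

/-- uniform bound for the amplitude product -/
noncomputable def CP : ℝ := 1 / π * Real.exp (2 * (π * (1 / 8))) * ((2 * Real.exp π * CD) * (2 * Real.exp π * CD))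

lemma PP_bound {w : ℂ} (hw : ‖w‖ ≤ 1 / 8) (w0 : w ≠ 0) {T : ℝ} (hT : 1 ≤ T) : ‖PP w T‖ ≤ CP := by
  have hwc : ‖(starRingEnd ℂ) w‖ ≤ 1 / 8 := by rwa [RCLike.norm_conj]
  have hT2 : 1 ≤ T ^ 2 := one_le_pow₀ hT
  have h1 := Gx_bound hT2 (good_sub hw)
  have h2 := Gx_bound hT2 (good_add hwc)
  have h3 : ‖Complex.sin (2 * (π * w))‖ ≤ Real.exp (2 * (π * (1 / 8))) := by
    refine (csin_norm_le _).trans (Real.exp_le_exp.2 ?_)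
    simp only [norm_mul, Complex.norm_real, RCLike.norm_ofNat, Real.norm_eq_abs, abs_of_pos pi_pos]
    gcongr
  rw [PP_eq hw w0 hT]
  unfold CP
  have hc := CD_nonneg
  rw [norm_mul, norm_mul, norm_mul (Gx _ _), RCLike.norm_conj]
  have h4 : ‖-(Complex.I / (π:ℂ))‖ = 1 / π := by
    simp [abs_of_pos pi_pos]
  rw [h4]
  gcongr


/-- a point on the circle of radius two -/
noncomputable def circ (θ : ℝ) : ℂ := 2 * Complex.exp (Complex.I * θ)

lemma circ_norm (θ : ℝ) : ‖circ θ‖ = 2 := by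
  unfold circ
  rw [norm_mul, mul_comm Complex.I, Complex.norm_exp_ofReal_mul_I]; simp

lemma circ_cont : Continuous circ := by unfold circ; fun_prop

lemma circ_orth (n : ℕ) : ∫ θ in (0:ℝ)..(2 * π), circ θ ^ n * Complex.exp (-3 * Complex.I * θ) =
    if n = 3 then 16 * (π : ℂ) else 0 := by
  have e : ∀ θ : ℝ, circ θ ^ n * Complex.exp (-3 * Complex.I * θ) =
      2 ^ n * Complex.exp ((((n:ℤ) - 3 : ℤ) * Complex.I) * θ) := by
    intro θ
    unfold circ
    rw [mul_pow, ← Complex.exp_nat_mul, mul_assoc, ← Complex.exp_add]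
    congr 2; push_cast; ring
  simp_rw [e]
  rw [intervalIntegral.integral_const_mul]
  split_ifs with h
  · subst h
    simp; ring
  · have h0 : ((n:ℤ) - 3 : ℤ) ≠ 0 := by omega
    rw [integral_exp_mul_complex (mul_ne_zero (by exact_mod_cast h0) Complex.I_ne_zero)]
    have : Complex.exp ((((n:ℤ) - 3 : ℤ) * Complex.I) * ((2 * π : ℝ) : ℂ)) = 1 := by
      rw [Complex.exp_eq_one_iff]
      exact ⟨(n:ℤ) - 3, by push_cast; ring⟩
    rw [this]; simp

lemma extract (c : ℕ → ℂ) (F : ℝ → ℂ) (h : ∀ θ, HasSum (fun n => c n * circ θ ^ n) (F θ)) :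
    Continuous F ∧ ∫ θ in (0:ℝ)..(2 * π), F θ * Complex.exp (-3 * Complex.I * θ) = 16 * π * c 3 := by
  have hs : Summable (fun n => ‖c n‖ * 2 ^ n) := by
    have := (h 0).summable.norm
    simpa [norm_mul, norm_pow, circ_norm] using this
  have hn : ∀ θ n, ‖c n * circ θ ^ n‖ = ‖c n‖ * 2 ^ n := by
    intro θ n; rw [norm_mul, norm_pow, circ_norm]
  have cc := circ_cont
  have he : ∀ θ : ℝ, ‖Complex.exp (-3 * Complex.I * θ)‖ = 1 := by
    intro θ
    rw [show -3 * Complex.I * (θ:ℂ) = ((-3 * θ : ℝ) : ℂ) * Complex.I by push_cast; ring,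
      Complex.norm_exp_ofReal_mul_I]
  constructor
  · have : F = fun θ => ∑' n, c n * circ θ ^ n := funext fun θ => (h θ).tsum_eq.symm
    rw [this]
    exact continuous_tsum (fun n => by fun_prop) hs (fun n θ => (hn θ n).le)
  · have H := intervalIntegral.hasSum_integral_of_dominated_convergence (μ := volume) (a := 0) (b := 2 * π)
      (F := fun n θ => c n * circ θ ^ n * Complex.exp (-3 * Complex.I * θ))
      (f := fun θ => F θ * Complex.exp (-3 * Complex.I * θ))
      (fun n _ => ‖c n‖ * 2 ^ n)
      (fun n => Continuous.aestronglyMeasurable (by fun_prop))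
      (fun n => ae_of_all _ fun θ _ => by rw [norm_mul, he, mul_one, hn])
      (ae_of_all _ fun θ _ => hs) (by simp)
      (ae_of_all _ fun θ _ => (h θ).mul_right _)
    refine H.unique ?_
    have e : ∀ n, ∫ θ in (0:ℝ)..(2 * π), c n * circ θ ^ n * Complex.exp (-3 * Complex.I * θ) =
        if n = 3 then 16 * π * c 3 else 0 := by
      intro n
      simp_rw [mul_assoc (c n)]
      rw [intervalIntegral.integral_const_mul, circ_orth]
      split_ifs with h3
      · rw [h3]; ring
      · simp
    simp_rw [e]
    exact hasSum_ite_eq 3 _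

/-- the limiting generating function -/
noncomputable def FL (μ : ℂ) : ℂ := 2 * Complex.exp (-(π / 4) * μ) - 1

lemma FL_int : ∫ θ in (0:ℝ)..(2 * π), FL (circ θ) * Complex.exp (-3 * Complex.I * θ) =
    16 * π * (-(π ^ 3 / 192)) := by
  have h : ∀ θ, HasSum (fun n => (2 * ((-(π / 4 : ℂ)) ^ n / (n.factorial : ℂ)) - if n = 0 then 1 else 0) * circ θ ^ n)
      (FL (circ θ)) := by
    intro θ
    have h1 : HasSum (fun n : ℕ => ((-(π / 4 : ℂ)) * circ θ) ^ n / (n.factorial : ℂ))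
        (Complex.exp ((-(π / 4 : ℂ)) * circ θ)) := by
      rw [Complex.exp_eq_exp_ℂ]
      exact NormedSpace.expSeries_div_hasSum_exp _
    have h2 := (h1.mul_left 2).sub (hasSum_ite_eq (0:ℕ) (1:ℂ))
    refine h2.congr_fun ?_
    intro n
    rw [mul_pow]
    split_ifs with h0
    · subst h0; simp
    · ring
  rw [(extract _ _ h).2]
  simp [Nat.factorial]
  ring

lemma k3_tendsto : Tendsto (fun T : ℝ => (volt T)^[3] (fun _ => 1) T) atTop (𝓝 ((π:ℂ) ^ 3 / 192)) := by
  set w : ℝ → ℂ := fun θ => Complex.I * circ θ / 16 with hwdef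
  have hw : ∀ θ, ‖w θ‖ ≤ 1 / 8 := by
    intro θ; simp only [hwdef, norm_div, norm_mul, Complex.norm_I, circ_norm, RCLike.norm_ofNat]; norm_num
  have w0 : ∀ θ, w θ ≠ 0 := by
    intro θ h
    have : ‖circ θ‖ = 0 := by
      have h2 : circ θ = 0 := by simpa [hwdef] using h
      rw [h2, norm_zero]
    rw [circ_norm] at this
    norm_num at this
  have hsum : ∀ T : ℝ, 0 ≤ T → ∀ θ, HasSum (fun n => ((-1) ^ n * (volt T)^[n] (fun _ => 1) T) * circ θ ^ n)
      (2 * (1 - PP (w θ) T) ^ 2 - 1) := by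
    intro T hT θ
    have := hasSum_w (hw θ) hT
    refine this.congr_fun fun n => ?_
    have : (-(4 * (-4 * Complex.I * w θ))) = -1 * circ θ := by
      simp only [hwdef]
      linear_combination (circ θ) * Complex.I_sq
    rw [this, mul_pow]; ring
  have hlim : Tendsto (fun T : ℝ => ∫ θ in (0:ℝ)..(2 * π),
      (2 * (1 - PP (w θ) T) ^ 2 - 1) * Complex.exp (-3 * Complex.I * θ)) atTop
      (𝓝 (∫ θ in (0:ℝ)..(2 * π), FL (circ θ) * Complex.exp (-3 * Complex.I * θ))) := by
    apply intervalIntegral.tendsto_integral_filter_of_dominated_convergence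
      (fun _ => 2 * (1 + CP) ^ 2 + 1)
    · filter_upwards [eventually_ge_atTop 0] with T hT
      have := (extract _ _ (hsum T hT)).1
      exact Continuous.aestronglyMeasurable (by fun_prop)
    · filter_upwards [eventually_ge_atTop 1] with T hT
      refine ae_of_all _ fun θ _ => ?_
      rw [norm_mul, show -3 * Complex.I * (θ:ℂ) = ((-3 * θ : ℝ) : ℂ) * Complex.I by push_cast; ring,
        Complex.norm_exp_ofReal_mul_I, mul_one]
      have hb := PP_bound (hw θ) (w0 θ) hT
      have h1 : ‖1 - PP (w θ) T‖ ≤ 1 + CP := by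
        refine (norm_sub_le _ _).trans ?_
        rw [norm_one]; linarith
      refine (norm_sub_le _ _).trans ?_
      rw [norm_one, norm_mul, norm_pow, RCLike.norm_ofNat]
      gcongr
    · simp
    · refine ae_of_all _ fun θ _ => ?_
      refine Tendsto.mul_const _ ?_
      have h1 := PP_tendsto (hw θ) (w0 θ)
      have h2 := (((h1.const_sub 1).pow 2).const_mul 2).sub_const 1
      have h3 : 2 * (1 - (1 - Complex.exp (2 * (π * w θ) * Complex.I))) ^ 2 - 1 = FL (circ θ) := by
        unfold FL
        rw [sub_sub_cancel, ← Complex.exp_nat_mul]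
        congr 3
        simp only [hwdef]
        push_cast
        linear_combination (π * circ θ / 4) * Complex.I_sq
      rw [h3] at h2
      exact h2
  rw [FL_int] at hlim
  have hp : (π:ℂ) ≠ 0 := by exact_mod_cast pi_ne_zero
  have h4 := hlim.const_mul (-(1 / (16 * π)) : ℂ)
  have h5 : (-(1 / (16 * π)) : ℂ) * (16 * π * (-(π ^ 3 / 192))) = π ^ 3 / 192 := by field_simp
  rw [h5] at h4
  refine h4.congr' ?_
  filter_upwards [eventually_ge_atTop 0] with T hT
  rw [(extract _ _ (hsum T hT)).2]
  field_simp


/-- The iterated improper integral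
`I₃ = ∫_{-∞}^{∞} ds₁ ∫_{-∞}^{s₁} ds₂ ⋯ ∫_{-∞}^{s₅} ds₆
      cos(s₁² − s₂²)·cos(s₃² − s₄²)·cos(s₅² − s₆²)`,
understood as the limit as `T → ∞` of the integral over the simplex
`{(s₁,…,s₆) : −T ≤ s₆ ≤ s₅ ≤ ⋯ ≤ s₂ ≤ s₁ ≤ T}`, converges and equals
`(2/3!)·(π/4)³ = π³/192`. -/
theorem I3_eq_pi_cubed_div_192 :
    Tendsto (fun T : ℝ =>
        ∫ s₁ in (-T)..T, ∫ s₂ in (-T)..s₁, ∫ s₃ in (-T)..s₂, ∫ s₄ in (-T)..s₃,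
          ∫ s₅ in (-T)..s₄, ∫ s₆ in (-T)..s₅,
          Real.cos (s₁ ^ 2 - s₂ ^ 2) * Real.cos (s₃ ^ 2 - s₄ ^ 2) *
            Real.cos (s₅ ^ 2 - s₆ ^ 2))
      atTop (𝓝 (π ^ 3 / 192)) := by
  have h := k3_tendsto
  simp_rw [volt3_eq] at h
  have h2 := (Complex.continuous_re.tendsto _).comp h
  have e : ((π:ℂ) ^ 3 / 192).re = π ^ 3 / 192 := by
    rw [show (π:ℂ) ^ 3 / 192 = ((π ^ 3 / 192 : ℝ) : ℂ) by push_cast; rfl, Complex.ofReal_re]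
  rw [e] at h2
  exact h2
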